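/- Let G be a locally finite vertex-transitive planar graph with exactly one end. Then every face boundary of any planar embedding of G contains only finitely many edges. -/

import Mathlib

open SimpleGraph

/-- A topological embedding of a graph `G` in the plane: vertices are points, edges are
arcs meeting only at common endpoints and avoiding other vertices. -/
structure PlanarEmbedding {V : Type*} (G : SimpleGraph V) where
  vpos : V → ℝ × ℝ
  vinj : Function.Injective vpos
  arc : ∀ ⦃u v : V⦄, G.Adj u v → Set (ℝ × ℝ)
  arc_isArc : ∀ ⦃u v : V⦄ (h : G.Adj u v),
    ∃ f : Path (vpos u) (vpos v), Function.Injective f ∧ Set.range f = arc h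
  arc_symm : ∀ ⦃u v : V⦄ (h : G.Adj u v), arc h.symm = arc h
  arc_inter : ∀ ⦃u v u' v' : V⦄ (h : G.Adj u v) (h' : G.Adj u' v'),
    s(u, v) ≠ s(u', v') → arc h ∩ arc h' ⊆ vpos '' (({u, v} : Set V) ∩ {u', v'})
  arc_vertex : ∀ ⦃u v : V⦄ (h : G.Adj u v) (w : V), vpos w ∈ arc h → w = u ∨ w = v

/-- The point set of the embedded graph. -/
def PlanarEmbedding.image {V : Type*} {G : SimpleGraph V} (emb : PlanarEmbedding G) :
    Set (ℝ × ℝ) :=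
  Set.range emb.vpos ∪ ⋃ (u : V) (v : V) (h : G.Adj u v), emb.arc h

/-- A face of the embedding: a connected component of the complement of the image. -/
def PlanarEmbedding.IsFace {V : Type*} {G : SimpleGraph V} (emb : PlanarEmbedding G)
    (F : Set (ℝ × ℝ)) : Prop :=
  ∃ x ∈ emb.imageᶜ, F = connectedComponentIn emb.imageᶜ x

/-- The boundary of a face: the set of edges whose arcs lie in the closure of the face. -/
def PlanarEmbedding.boundaryEdges {V : Type*} {G : SimpleGraph V} (emb : PlanarEmbedding G)
    (F : Set (ℝ × ℝ)) : Set (Sym2 V) :=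
  {e | ∃ (u v : V) (h : G.Adj u v), e = s(u, v) ∧ emb.arc h ⊆ closure F}

/-- A peripheral cycle: a cycle that is induced (chordless) and non-separating. -/
def IsPeripheral {V : Type*} (G : SimpleGraph V) {v : V} (w : G.Walk v v) : Prop :=
  w.IsCycle ∧ (∀ a ∈ w.support, ∀ b ∈ w.support, G.Adj a b → s(a, b) ∈ w.edges) ∧
    ({x | x ∉ w.support} = (∅ : Set V) ∨ (G.induce {x | x ∉ w.support}).Connected)

/-- A 3-connected graph: more than 3 vertices, and removing any at most 2 vertices leaves
it connected. -/
def ThreeConnected {V : Type*} (G : SimpleGraph V) : Prop :=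
  (3 < Nat.card V ∨ Infinite V) ∧
    ∀ s : Set V, s.Finite → s.ncard ≤ 2 → (G.induce sᶜ).Connected

/-- A locally finite graph has exactly one end. -/
def OneEnded {V : Type*} (G : SimpleGraph V) : Prop :=
  ∀ K : Finset V, ∃! C : G.ComponentCompl (K : Set V), C.supp.Infinite

/-! ### Part 1: a topological `K₃,₃` cannot be drawn in the plane -/

/-- A nonvanishing continuous function on a simply connected space has a continuous logarithm. -/
theorem fb_exists_log {A : Type*} [TopologicalSpace A] [SimplyConnectedSpace A]
    [LocallyPathConnectedSpace A] (g : A → ℂ) (hg : Continuous g) (h0 : ∀ a, g a ≠ 0) (a₀ : A) :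
    ∃ l : A → ℂ, Continuous l ∧ ∀ a, Complex.exp (l a) = g a := by
  obtain ⟨F, ⟨-, hF⟩, -⟩ := Complex.isCoveringMapOn_exp.existsUnique_continuousMap_lifts
    (⟨g, hg⟩ : C(A, ℂ)) (Complex.exp_log (h0 a₀)) (fun a => h0 a)
  exact ⟨F, F.continuous, fun a => congrFun hF a⟩

theorem fb_log_unique (l₁ l₂ : ℝ → ℂ) (h₁ : Continuous l₁) (h₂ : Continuous l₂) (c : ℂ)
    (h : ∀ t, Complex.exp (l₁ t) = c * Complex.exp (l₂ t)) :
    l₁ 1 - l₁ 0 = l₂ 1 - l₂ 0 := by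
  obtain ⟨F, -, hF⟩ := Complex.isCoveringMapOn_exp.existsUnique_continuousMap_lifts
    (⟨fun t => Complex.exp (l₁ t), by fun_prop⟩ : C(ℝ, ℂ)) (a₀ := 0) (e₀ := l₁ 0) rfl
    (fun a => Complex.exp_ne_zero _)
  have e1 := hF ⟨l₁, h₁⟩ ⟨rfl, rfl⟩
  have e2 := hF ⟨fun t => l₂ t + (l₁ 0 - l₂ 0), by fun_prop⟩ ⟨by simp, by
    funext t
    simp only [Function.comp, ContinuousMap.coe_mk]
    rw [Complex.exp_add, Complex.exp_sub, h 0, h t]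
    field_simp [Complex.exp_ne_zero]⟩
  have := DFunLike.congr_fun (e1.trans e2.symm) 1
  simp only [ContinuousMap.coe_mk] at this
  rw [this]; ring

open Classical in
/-- Variation of the logarithm of `g` between `0` and `1`. -/
noncomputable def fbVar (g : ℝ → ℂ) : ℂ :=
  if h : ∃ l : ℝ → ℂ, Continuous l ∧ ∀ t, Complex.exp (l t) = g t then
    h.choose 1 - h.choose 0 else 0

theorem fbVar_eq (g l : ℝ → ℂ) (hl : Continuous l) (c : ℂ) (hc : c ≠ 0)
    (h : ∀ t, Complex.exp (l t) = c * g t) : fbVar g = l 1 - l 0 := by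
  have hex : ∃ l : ℝ → ℂ, Continuous l ∧ ∀ t, Complex.exp (l t) = g t :=
    ⟨fun t => l t - Complex.log c, by fun_prop, fun t => by
      rw [Complex.exp_sub, h, Complex.exp_log hc]; field_simp⟩
  rw [fbVar, dif_pos hex]
  refine (fb_log_unique _ _ hl hex.choose_spec.1 c fun t => ?_).symm
  rw [hex.choose_spec.2, h]

theorem fb_exp_var (g : ℝ → ℂ) (hg : Continuous g) (h0 : ∀ t, g t ≠ 0) :
    Complex.exp (fbVar g) = g 1 / g 0 := by
  obtain ⟨l, hl, h⟩ := fb_exists_log g hg h0 0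
  rw [fbVar_eq g l hl 1 one_ne_zero (by simpa using h), Complex.exp_sub, h, h]

theorem fb_cell (e f : ℝ → ℂ) (he : Continuous e) (hf : Continuous f)
    (hd : ∀ s t, e s ≠ f t) :
    fbVar (fun s => e s - f 0) + fbVar (fun t => f t - e 1) =
      fbVar (fun s => e s - f 1) + fbVar (fun t => f t - e 0) := by
  obtain ⟨l, hl, h⟩ := fb_exists_log (fun x : ℝ × ℝ => e x.1 - f x.2) (by fun_prop)
    (fun x => sub_ne_zero.2 (hd _ _)) (0, 0)
  rw [fbVar_eq _ (fun s => l (s, 0)) (by fun_prop) 1 one_ne_zero (by intro t; simp [h]),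
    fbVar_eq _ (fun t => l (1, t)) (by fun_prop) (-1) (by simp) (by intro t; simp [h]),
    fbVar_eq _ (fun s => l (s, 1)) (by fun_prop) 1 one_ne_zero (by intro t; simp [h]),
    fbVar_eq _ (fun t => l (0, t)) (by fun_prop) (-1) (by simp) (by intro t; simp [h])]
  ring

open Classical in
/-- A logarithm of `x k - x i`, antisymmetric up to `π * I`. -/
noncomputable def fbLog (x : Fin 3 → ℂ) (i k : Fin 3) : ℂ :=
  if i < k then Complex.log (x k - x i) else Complex.log (x i - x k) + Real.pi * Complex.I

theorem fb_exp_log (x : Fin 3 → ℂ) (i k : Fin 3) (h : x i ≠ x k) :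
    Complex.exp (fbLog x i k) = x k - x i := by
  unfold fbLog
  split_ifs
  · exact Complex.exp_log (sub_ne_zero.2 h.symm)
  · rw [Complex.exp_add, Complex.exp_log (sub_ne_zero.2 h), Complex.exp_pi_mul_I]; ring

theorem fb_log_anti (x : Fin 3 → ℂ) (i k : Fin 3) (h : i < k) :
    fbLog x k i = fbLog x i k + Real.pi * Complex.I := by
  simp [fbLog, h, not_lt.2 h.le]

theorem fb_no_K33 (e : Fin 3 → Fin 3 → ℝ → ℂ) (p q : Fin 3 → ℂ)
    (hc : ∀ i j, Continuous (e i j)) (h0 : ∀ i j, e i j 0 = p i) (h1 : ∀ i j, e i j 1 = q j)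
    (hd : ∀ i j k l, i ≠ k → j ≠ l → ∀ s t, e i j s ≠ e k l t) : False := by
  have other : ∀ i : Fin 3, ∃ k, i ≠ k := by decide
  have hep : ∀ i k l, i ≠ k → ∀ s, e k l s ≠ p i := by
    intro i k l hik s
    obtain ⟨j, hj⟩ := other l
    rw [← h0 i j]
    exact hd _ _ _ _ hik.symm hj _ _
  have heq : ∀ j k l, j ≠ l → ∀ s, e k l s ≠ q j := by
    intro j k l hjl s
    obtain ⟨i, hi⟩ := other k
    rw [← h1 i j]
    exact hd _ _ _ _ hi hjl.symm _ _
  have hpp : ∀ i k, i ≠ k → p i ≠ p k := by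
    intro i k h
    have := hep i k 0 h 0
    rw [h0] at this; exact this.symm
  have hqq : ∀ j l, j ≠ l → q j ≠ q l := by
    intro j l h
    have := heq j 0 l h 1
    rw [h1] at this; exact this.symm
  have hpq : ∀ i l, q l ≠ p i := by
    intro i l
    obtain ⟨k, hk⟩ := other i
    have := hep i k l hk 1
    rwa [h1] at this
  set μ : Fin 3 → Fin 3 → ℂ := fun i l => Complex.log (q l - p i) with hμ
  have eμ : ∀ i l, Complex.exp (μ i l) = q l - p i := fun i l =>
    Complex.exp_log (sub_ne_zero.2 (hpq i l))
  have hP : ∀ i k l, ∃ n : ℤ, i ≠ k → fbVar (fun s => e k l s - p i) =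
      μ i l - fbLog p i k + n * (2 * Real.pi * Complex.I) := by
    intro i k l
    by_cases hik : i = k
    · exact ⟨0, fun h => absurd hik h⟩
    have := fb_exp_var (fun s => e k l s - p i) ((hc k l).sub continuous_const)
      (fun s => sub_ne_zero.2 (hep i k l hik s))
    simp only [h0, h1] at this
    rw [← eμ, ← fb_exp_log p i k (hpp _ _ hik), ← Complex.exp_sub,
      Complex.exp_eq_exp_iff_exists_int] at this
    obtain ⟨n, hn⟩ := this
    exact ⟨n, fun _ => hn⟩
  have hQ : ∀ j k l, ∃ n : ℤ, j ≠ l → fbVar (fun s => e k l s - q j) =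
      fbLog q j l - (μ k j + Real.pi * Complex.I) + n * (2 * Real.pi * Complex.I) := by
    intro j k l
    by_cases hjl : j = l
    · exact ⟨0, fun h => absurd hjl h⟩
    have := fb_exp_var (fun s => e k l s - q j) ((hc k l).sub continuous_const)
      (fun s => sub_ne_zero.2 (heq j k l hjl s))
    simp only [h0, h1] at this
    have e2 : p k - q j = Complex.exp (μ k j + Real.pi * Complex.I) := by
      rw [Complex.exp_add, eμ, Complex.exp_pi_mul_I]; ring
    rw [e2, ← fb_exp_log q j l (hqq _ _ hjl), ← Complex.exp_sub,
      Complex.exp_eq_exp_iff_exists_int] at this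
    obtain ⟨n, hn⟩ := this
    exact ⟨n, fun _ => hn⟩
  choose n hn using hP
  choose m hm using hQ
  have key : ∀ i k j l, i < k → j < l →
      n k i j - n i k l + m j k l - m l i j = 1 ∧ n k i l - n i k j + m l k j - m j i l = 0 := by
    intro i k j l hik hjl
    have c1 := fb_cell (e i j) (e k l) (hc _ _) (hc _ _) (hd _ _ _ _ hik.ne hjl.ne)
    have c2 := fb_cell (e i l) (e k j) (hc _ _) (hc _ _) (hd _ _ _ _ hik.ne hjl.ne')
    simp only [h0, h1] at c1 c2
    rw [hn _ _ _ hik.ne, hn _ _ _ hik.ne', hm _ _ _ hjl.ne, hm _ _ _ hjl.ne',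
      fb_log_anti p i k hik, fb_log_anti q j l hjl] at c1 c2
    have hpi : (2 * Real.pi * Complex.I : ℂ) ≠ 0 := Complex.two_pi_I_ne_zero
    constructor
    · have : ((n k i j - n i k l + m j k l - m l i j : ℤ) : ℂ) * (2 * Real.pi * Complex.I) =
          ((1 : ℤ) : ℂ) * (2 * Real.pi * Complex.I) := by
        push_cast; linear_combination c1
      exact_mod_cast mul_right_cancel₀ hpi this
    · have : ((n k i l - n i k j + m l k j - m j i l : ℤ) : ℂ) * (2 * Real.pi * Complex.I) =
          ((0 : ℤ) : ℂ) * (2 * Real.pi * Complex.I) := by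
        push_cast; linear_combination c2
      exact_mod_cast mul_right_cancel₀ hpi this
  have a1 := key 0 1 0 1 (by decide) (by decide)
  have a2 := key 0 1 0 2 (by decide) (by decide)
  have a3 := key 0 1 1 2 (by decide) (by decide)
  have a4 := key 0 2 0 1 (by decide) (by decide)
  have a5 := key 0 2 0 2 (by decide) (by decide)
  have a6 := key 0 2 1 2 (by decide) (by decide)
  have a7 := key 1 2 0 1 (by decide) (by decide)
  have a8 := key 1 2 0 2 (by decide) (by decide)
  have a9 := key 1 2 1 2 (by decide) (by decide)
  omega

/-! ### Part 2: connected vertex sets and the planar obstruction -/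

/-- Connectedness of a vertex set (possibly empty), by cuts. -/
def FbConn {V : Type*} (G : SimpleGraph V) (S : Set V) : Prop :=
  ∀ T ⊆ S, T.Nonempty → (∀ x ∈ T, ∀ y ∈ S, G.Adj x y → y ∈ T) → S ⊆ T

theorem FbConn.union {V : Type*} {G : SimpleGraph V} {S S' : Set V} (h : FbConn G S)
    (h' : FbConn G S') {z : V} (hz : z ∈ S) (hz' : z ∈ S') : FbConn G (S ∪ S') := by
  intro T hT hne hcl
  have k1 : (T ∩ S).Nonempty → S ⊆ T := fun hn =>
    (h (T ∩ S) Set.inter_subset_right hn fun x hx y hy hxy =>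
      ⟨hcl x hx.1 y (Or.inl hy) hxy, hy⟩).trans Set.inter_subset_left
  have k2 : (T ∩ S').Nonempty → S' ⊆ T := fun hn =>
    (h' (T ∩ S') Set.inter_subset_right hn fun x hx y hy hxy =>
      ⟨hcl x hx.1 y (Or.inr hy) hxy, hy⟩).trans Set.inter_subset_left
  obtain ⟨t, ht⟩ := hne
  rcases hT ht with hs | hs
  · have a := k1 ⟨t, ht, hs⟩
    exact Set.union_subset a (k2 ⟨z, a hz, hz'⟩)
  · have a := k2 ⟨t, ht, hs⟩
    exact Set.union_subset (k1 ⟨z, a hz', hz⟩) a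

theorem FbConn.singleton {V : Type*} {G : SimpleGraph V} (a : V) : FbConn G {a} := by
  intro T hT hne _
  obtain ⟨t, ht⟩ := hne
  have := hT ht
  simp only [Set.mem_singleton_iff] at this
  subst this
  simpa using ht

theorem FbConn.pair {V : Type*} {G : SimpleGraph V} {a b : V} (h : G.Adj a b) :
    FbConn G {a, b} := by
  intro T hT hne hcl
  obtain ⟨t, ht⟩ := hne
  have k : a ∈ T ∧ b ∈ T := by
    rcases hT ht with rfl | h'
    · exact ⟨ht, hcl _ ht b (by simp) h⟩
    · simp only [Set.mem_singleton_iff] at h'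
      subst h'
      exact ⟨hcl _ ht a (by simp) h.symm, ht⟩
  rintro x (rfl | h')
  · exact k.1
  · simp only [Set.mem_singleton_iff] at h'
    subst h'; exact k.2

theorem FbConn.union_adj {V : Type*} {G : SimpleGraph V} {S S' : Set V} (h : FbConn G S)
    (h' : FbConn G S') {z z' : V} (hz : z ∈ S) (hz' : z' ∈ S') (ha : G.Adj z z') :
    FbConn G (S ∪ S') := by
  have h1 := (h.union (FbConn.pair ha) hz (by simp)).union h' (z := z') (by simp) hz'
  have : S ∪ {z, z'} ∪ S' = S ∪ S' := by
    ext x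
    simp only [Set.mem_union, Set.mem_insert_iff, Set.mem_singleton_iff]
    constructor
    · rintro ((h | rfl | rfl) | h) <;> simp [*]
    · rintro (h | h) <;> simp [*]
  rwa [this] at h1

theorem FbConn.image {V : Type*} {G : SimpleGraph V} {S : Set V} (h : FbConn G S)
    (α : G ≃g G) : FbConn G (α '' S) := by
  intro T hT hne hcl
  have := h (α ⁻¹' T ∩ S) Set.inter_subset_right (by
    obtain ⟨t, ht⟩ := hne
    obtain ⟨s, hs, rfl⟩ := hT ht
    exact ⟨s, ht, hs⟩) (by
    intro x hx y hy hxy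
    exact ⟨hcl _ hx.1 _ ⟨y, hy, rfl⟩ (α.map_adj_iff.2 hxy), hy⟩)
  rintro _ ⟨s, hs, rfl⟩
  exact (this hs).1

/-- The drawing of the subgraph induced on `S`. -/
def fbIm {V : Type*} {G : SimpleGraph V} (emb : PlanarEmbedding G) (S : Set V) : Set (ℝ × ℝ) :=
  emb.vpos '' S ∪ ⋃ (u ∈ S) (v ∈ S) (h : G.Adj u v), emb.arc h

theorem fb_mem_im {V : Type*} {G : SimpleGraph V} (emb : PlanarEmbedding G) {S : Set V}
    {x : ℝ × ℝ} : x ∈ fbIm emb S ↔ (∃ u ∈ S, emb.vpos u = x) ∨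
      ∃ u ∈ S, ∃ v ∈ S, ∃ h : G.Adj u v, x ∈ emb.arc h := by
  simp [fbIm]

theorem fb_arc_ends {V : Type*} {G : SimpleGraph V} (emb : PlanarEmbedding G) {u v : V}
    (h : G.Adj u v) : emb.vpos u ∈ emb.arc h ∧ emb.vpos v ∈ emb.arc h := by
  obtain ⟨f, -, hf⟩ := emb.arc_isArc h
  rw [← hf]
  exact ⟨⟨0, f.source⟩, ⟨1, f.target⟩⟩

theorem fb_im_disjoint {V : Type*} {G : SimpleGraph V} (emb : PlanarEmbedding G) {S T : Set V}
    (hST : Disjoint S T) : Disjoint (fbIm emb S) (fbIm emb T) := by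
  rw [Set.disjoint_left] at hST ⊢
  intro x hx hy
  rw [fb_mem_im] at hx hy
  rcases hx with ⟨u, hu, rfl⟩ | ⟨u, hu, v, hv, h, hx⟩
  · rcases hy with ⟨w, hw, e⟩ | ⟨w, hw, z, hz, h', hy⟩
    · exact hST hu (emb.vinj e ▸ hw)
    · rcases emb.arc_vertex h' u hy with rfl | rfl
      exacts [hST hu hw, hST hu hz]
  · rcases hy with ⟨w, hw, rfl⟩ | ⟨w, hw, z, hz, h', hy⟩
    · rcases emb.arc_vertex h w hx with rfl | rfl
      exacts [hST hu hw, hST hv hw]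
    · have hne : s(u, v) ≠ s(w, z) := by
        intro e
        rw [Sym2.eq_iff] at e
        rcases e with ⟨rfl, rfl⟩ | ⟨rfl, rfl⟩
        exacts [hST hu hw, hST hu hz]
      obtain ⟨t, ⟨ht, ht'⟩, -⟩ := emb.arc_inter h h' hne ⟨hx, hy⟩
      have htS : t ∈ S := by
        rcases ht with rfl | ht
        · exact hu
        · simp only [Set.mem_singleton_iff] at ht; subst ht; exact hv
      have htT : t ∈ T := by
        rcases ht' with rfl | ht
        · exact hw
        · simp only [Set.mem_singleton_iff] at ht; subst ht; exact hz
      exact hST htS htT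

theorem fb_im_joined {V : Type*} {G : SimpleGraph V} (emb : PlanarEmbedding G) {S : Set V}
    (hS : FbConn G S) {u v : V} (hu : u ∈ S) (hv : v ∈ S) :
    JoinedIn (fbIm emb S) (emb.vpos u) (emb.vpos v) := by
  have hmem : ∀ w ∈ S, emb.vpos w ∈ fbIm emb S := fun w hw =>
    (fb_mem_im emb).2 (Or.inl ⟨w, hw, rfl⟩)
  have := hS {w | w ∈ S ∧ JoinedIn (fbIm emb S) (emb.vpos u) (emb.vpos w)} (fun w hw => hw.1)
    ⟨u, hu, JoinedIn.refl (hmem u hu)⟩ (by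
      rintro x ⟨hx, hj⟩ y hy hxy
      refine ⟨hy, hj.trans ?_⟩
      obtain ⟨f, -, hf⟩ := emb.arc_isArc hxy
      refine ⟨f, fun t => (fb_mem_im emb).2 (Or.inr ⟨x, hx, y, hy, hxy, ?_⟩)⟩
      rw [← hf]; exact ⟨t, rfl⟩)
  exact (this hv).2

theorem fb_im_compact {V : Type*} {G : SimpleGraph V} (emb : PlanarEmbedding G) {S : Set V}
    (hS : S.Finite) : IsCompact (fbIm emb S) := by
  refine (hS.image _).isCompact.union ?_
  refine hS.isCompact_biUnion fun u _ => hS.isCompact_biUnion fun v _ => ?_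
  refine isCompact_iUnion fun h => ?_
  obtain ⟨f, -, hf⟩ := emb.arc_isArc h
  rw [← hf]
  exact isCompact_range f.continuous

theorem fb_im_subset {V : Type*} {G : SimpleGraph V} (emb : PlanarEmbedding G) (S : Set V) :
    fbIm emb S ⊆ emb.image := by
  intro x hx
  rw [fb_mem_im] at hx
  unfold PlanarEmbedding.image
  rcases hx with ⟨u, hu, rfl⟩ | ⟨u, hu, v, hv, h, hx⟩
  · exact Or.inl ⟨u, rfl⟩
  · exact Or.inr (by simp only [Set.mem_iUnion]; exact ⟨u, v, h, hx⟩)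

/-- The combinatorial obstruction: a `K₃,₃` minor missing the edge between the row `R 0` and the
column `D 0`. -/
structure FbConfig {V : Type*} (G : SimpleGraph V) (R D : Fin 3 → Set V) : Prop where
  rr : ∀ i k, i ≠ k → Disjoint (R i) (R k)
  dd : ∀ i k, i ≠ k → Disjoint (D i) (D k)
  rd : ∀ i k, Disjoint (R i) (D k)
  conn : ∀ i j, ¬ (i = 0 ∧ j = 0) → FbConn G (R i ∪ D j)
  nr : ∀ i, (R i).Nonempty
  nd : ∀ i, (D i).Nonempty
  fr : ∀ i, (R i).Finite
  fd : ∀ i, i ≠ 0 → (D i).Finite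
  cd : (D 0)ᶜ.Finite

theorem FbConfig.image {V : Type*} {G : SimpleGraph V} {R D : Fin 3 → Set V}
    (h : FbConfig G R D) (α : G ≃g G) :
    FbConfig G (fun i => α '' R i) (fun i => α '' D i) where
  rr i k hik := (Set.disjoint_image_iff α.injective).2 (h.rr i k hik)
  dd i k hik := (Set.disjoint_image_iff α.injective).2 (h.dd i k hik)
  rd i k := (Set.disjoint_image_iff α.injective).2 (h.rd i k)
  conn i j hij := by rw [← Set.image_union]; exact (h.conn i j hij).image α
  nr i := (h.nr i).image _
  nd i := (h.nd i).image _
  fr i := (h.fr i).image _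
  fd i hi := (h.fd i hi).image _
  cd := by
    rw [← Set.image_compl_eq α.bijective]
    exact h.cd.image _

theorem fb_config_false {V : Type*} {G : SimpleGraph V} (emb : PlanarEmbedding G)
    {R D : Fin 3 → Set V} (h : FbConfig G R D) {F : Set (ℝ × ℝ)} (hF : IsPreconnected F)
    (hFi : Disjoint F emb.image) {v w : V} (hv : v ∈ R 0) (hw : w ∈ D 0)
    (hvF : emb.vpos v ∈ closure F) (hwF : emb.vpos w ∈ closure F) : False := by
  classical
  choose r hr using h.nr
  choose d hd using h.nd
  set p : Fin 3 → V := fun i => if i = 0 then v else r i with hp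
  set q : Fin 3 → V := fun i => if i = 0 then w else d i with hq
  have hpR : ∀ i, p i ∈ R i := by
    intro i; by_cases hi : i = 0
    · subst hi; simpa [hp] using hv
    · simpa [hp, hi] using hr i
  have hqD : ∀ i, q i ∈ D i := by
    intro i; by_cases hi : i = 0
    · subst hi; simpa [hq] using hw
    · simpa [hq, hi] using hd i
  set K : Set (ℝ × ℝ) := ⋃ (i : {i : Fin 3 // i ≠ 0}) (j : {i : Fin 3 // i ≠ 0}),
    fbIm emb (R i ∪ D j) with hK
  have hKc : IsCompact K := isCompact_iUnion fun i => isCompact_iUnion fun j =>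
    fb_im_compact emb ((h.fr i).union (h.fd j j.2))
  have hKi : K ⊆ emb.image := Set.iUnion_subset fun i => Set.iUnion_subset fun j =>
    fb_im_subset emb _
  have hout : ∀ z ∈ R 0 ∪ D 0, emb.vpos z ∈ Kᶜ := by
    intro z hz hzK
    simp only [hK, Set.mem_iUnion] at hzK
    obtain ⟨i, j, hzK⟩ := hzK
    refine Set.disjoint_left.1 (fb_im_disjoint emb (S := {z}) (T := R i ∪ D j) ?_)
      ((fb_mem_im emb).2 (Or.inl ⟨z, rfl, rfl⟩)) hzK
    rw [Set.disjoint_singleton_left]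
    rintro (h' | h') <;> rcases hz with hz | hz
    · exact Set.disjoint_left.1 (h.rr _ _ i.2) h' hz
    · exact Set.disjoint_left.1 (h.rd _ _) h' hz
    · exact Set.disjoint_left.1 (h.rd _ _) hz h'
    · exact Set.disjoint_left.1 (h.dd _ _ j.2) h' hz
  have hvK := hout v (Or.inl hv)
  have hwK := hout w (Or.inr hw)
  have hspecial : JoinedIn Kᶜ (emb.vpos v) (emb.vpos w) := by
    set F' : Set (ℝ × ℝ) := F ∪ {emb.vpos v, emb.vpos w} with hF'
    have hF'c : IsPreconnected F' := hF.subset_closure Set.subset_union_left (by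
      refine Set.union_subset subset_closure ?_
      rintro x (rfl | rfl)
      exacts [hvF, hwF])
    have hF'K : F' ⊆ Kᶜ := by
      refine Set.union_subset (fun x hx hxK => Set.disjoint_left.1 hFi hx (hKi hxK)) ?_
      rintro x (rfl | rfl)
      exacts [hvK, hwK]
    have hvF' : emb.vpos v ∈ F' := by simp [hF']
    have hwF' : emb.vpos w ∈ F' := by simp [hF']
    have hop : IsOpen (connectedComponentIn Kᶜ (emb.vpos v)) :=
      hKc.isClosed.isOpen_compl.connectedComponentIn
    have hcc : IsConnected (connectedComponentIn Kᶜ (emb.vpos v)) :=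
      isConnected_connectedComponentIn_iff.2 hvK
    have hpc := hop.isConnected_iff_isPathConnected.1 hcc
    exact (hpc.joinedIn _ (mem_connectedComponentIn hvK) _
      (hF'c.subset_connectedComponentIn hvF' hF'K hwF')).mono (connectedComponentIn_subset _ _)
  have hpath : ∀ i j, ∃ γ : Path (emb.vpos (p i)) (emb.vpos (q j)),
      (∀ t, γ t ∈ if i = 0 ∧ j = 0 then Kᶜ else fbIm emb (R i ∪ D j)) := by
    intro i j
    by_cases hij : i = 0 ∧ j = 0
    · obtain ⟨rfl, rfl⟩ := hij
      obtain ⟨γ, hγ⟩ := hspecial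
      exact ⟨γ, by simpa using hγ⟩
    · obtain ⟨γ, hγ⟩ := fb_im_joined emb (h.conn i j hij) (Or.inl (hpR i)) (Or.inr (hqD j))
      exact ⟨γ, by simpa [hij] using hγ⟩
  choose γ hγ using hpath
  have hdisj : ∀ i j k l, i ≠ k → j ≠ l → ∀ s t, γ i j s ≠ γ k l t := by
    intro i j k l hik hjl s t e
    have h1 := hγ i j s
    have h2 := hγ k l t
    rw [e] at h1
    by_cases hij : i = 0 ∧ j = 0
    · have hkl : ¬ (k = 0 ∧ l = 0) := fun hh => hik (hij.1.trans hh.1.symm)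
      rw [if_pos hij] at h1
      rw [if_neg hkl] at h2
      refine h1 ?_
      simp only [hK, Set.mem_iUnion]
      exact ⟨⟨k, fun hh => hik (hij.1.trans hh.symm)⟩, ⟨l, fun hh => hjl (hij.2.trans hh.symm)⟩, h2⟩
    · by_cases hkl : k = 0 ∧ l = 0
      · rw [if_neg hij] at h1
        rw [if_pos hkl] at h2
        refine h2 ?_
        simp only [hK, Set.mem_iUnion]
        exact ⟨⟨i, fun hh => hik (hh.trans hkl.1.symm)⟩, ⟨j, fun hh => hjl (hh.trans hkl.2.symm)⟩,
          h1⟩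
      · rw [if_neg hij] at h1
        rw [if_neg hkl] at h2
        refine Set.disjoint_left.1 (fb_im_disjoint emb ?_) h1 h2
        simp only [Set.disjoint_union_left, Set.disjoint_union_right]
        exact ⟨⟨h.rr _ _ hik, (h.rd _ _).symm⟩, h.rd _ _, h.dd _ _ hjl⟩
  let φ := Complex.equivRealProdCLM.symm
  refine fb_no_K33 (fun i j t => φ ((γ i j).extend t)) (fun i => φ (emb.vpos (p i)))
    (fun j => φ (emb.vpos (q j))) (fun i j => φ.continuous.comp (γ i j).continuous_extend)
    (fun i j => by simp) (fun i j => by simp) ?_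
  intro i j k l hik hjl s t e
  exact hdisj i j k l hik hjl _ _ (φ.injective e)

/-! ### Part 3: one-endedness in terms of sets -/

theorem fb_comp_conn {V : Type*} {G : SimpleGraph V} {K : Set V} (C : G.ComponentCompl K) :
    FbConn G C.supp := by
  intro T hT hne hcl
  obtain ⟨t, ht⟩ := hne
  obtain ⟨htK, htC⟩ := hT ht
  rintro x ⟨hxK, hxC⟩
  have hr : (G.induce Kᶜ).Reachable ⟨t, htK⟩ ⟨x, hxK⟩ :=
    ConnectedComponent.eq.1 (htC.trans hxC.symm)
  obtain ⟨p⟩ := hr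
  have key : ∀ (a b : (Kᶜ : Set V)), (G.induce Kᶜ).Walk a b → (a : V) ∈ T → (b : V) ∈ T := by
    intro a b p
    induction p with
    | nil => exact id
    | @cons u v w h q ih =>
      intro ha
      refine ih (hcl _ ha _ ?_ h)
      exact ComponentCompl.mem_of_adj (C := C) _ _ (hT ha) v.2 h
  exact key _ _ p ht

theorem fb_conn_univ {V : Type*} {G : SimpleGraph V}
    (htrans : ∀ u v : V, ∃ α : G ≃g G, α u = v) (hone : OneEnded G) :
    FbConn G Set.univ := by
  obtain ⟨C, hC, hu⟩ := hone ∅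
  have hall : ∀ v, v ∈ C.supp := by
    intro v
    obtain ⟨c, hc⟩ := hC.nonempty
    obtain ⟨α, hα⟩ := htrans c v
    have hv : v ∉ ((∅ : Finset V) : Set V) := by simp
    have hsub := fb_comp_conn C {x | x ∈ C.supp ∧ α x ∈ (G.componentComplMk hv).supp}
      (fun x hx => hx.1) ⟨c, hc, by rw [hα]; exact ⟨hv, rfl⟩⟩ (by
        rintro x ⟨hx, hx'⟩ y hy hxy
        exact ⟨hy, ComponentCompl.mem_of_adj (C := G.componentComplMk hv) _ _ hx' (by simp)
          (α.map_adj_iff.2 hxy)⟩)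
    have hinf : (G.componentComplMk hv).supp.Infinite := by
      refine (hC.image (f := α) α.injective.injOn).mono ?_
      rintro _ ⟨x, hx, rfl⟩
      exact (hsub hx).2
    rw [← hu _ hinf]
    exact ⟨hv, rfl⟩
  have := fb_comp_conn C
  rwa [Set.eq_univ_of_forall hall] at this

theorem fb_preconn {V : Type*} {G : SimpleGraph V} (h : FbConn G Set.univ) : G.Preconnected := by
  intro u v
  exact h {w | G.Reachable u w} (Set.subset_univ _) ⟨u, Reachable.refl u⟩
    (fun x hx y _ hxy => Reachable.trans hx hxy.reachable) (Set.mem_univ v)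

theorem fb_end {V : Type*} {G : SimpleGraph V} [G.LocallyFinite]
    (hconn : FbConn G Set.univ) (hone : OneEnded G) (K : Set V) (hK : K.Finite) :
    ∃ C : Set V, C ⊆ Kᶜ ∧ FbConn G C ∧ (∀ x ∈ C, ∀ y, y ∉ K → G.Adj x y → y ∈ C) ∧
      Cᶜ.Finite ∧ C.Infinite := by
  lift K to Finset V using hK
  have : Fact G.Preconnected := ⟨fb_preconn hconn⟩
  obtain ⟨C, hC, hu⟩ := hone K
  refine ⟨C.supp, fun x hx => hx.1, fb_comp_conn C,
    fun x hx y hy hxy => ComponentCompl.mem_of_adj (C := C) x y hx hy hxy, ?_, hC⟩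
  have hfin : (⋃ D : {D : G.ComponentCompl (K : Set V) // D ≠ C}, D.1.supp).Finite := by
    refine Set.finite_iUnion fun D => ?_
    by_contra hD
    exact D.2 (hu _ hD)
  refine (K.finite_toSet.union hfin).subset fun x hx => ?_
  by_cases hxK : x ∈ (K : Set V)
  · exact Or.inl hxK
  · refine Or.inr (Set.mem_iUnion.2 ⟨⟨G.componentComplMk hxK, ?_⟩, hxK, rfl⟩)
    intro e
    exact hx ⟨hxK, e⟩


/-! ### Part 4: a finite set that is not cut off from the end by two vertices -/

/-- `C` is an infinite component of the complement of `K`, with finite complement. -/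
structure FbEnd {V : Type*} (G : SimpleGraph V) (K C : Set V) : Prop where
  sub : C ⊆ Kᶜ
  conn : FbConn G C
  closed : ∀ x ∈ C, ∀ y, y ∉ K → G.Adj x y → y ∈ C
  cofin : Cᶜ.Finite
  inf : C.Infinite

theorem FbConn.exists_boundary {V : Type*} {G : SimpleGraph V} {S : Set V} (h : FbConn G S)
    {T : Set V} (hT : T ⊆ S) (hne : T.Nonempty) (hn : ¬ S ⊆ T) :
    ∃ x ∈ T, ∃ y ∈ S, y ∉ T ∧ G.Adj x y := by
  by_contra! hc
  refine hn (h T hT hne fun x hx y hy hxy => ?_)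
  by_contra hyT
  exact hc x hx y hy hyT hxy

theorem FbConn.subset_of_closed {V : Type*} {G : SimpleGraph V} {S : Set V} (h : FbConn G S)
    {T : Set V} (hne : (S ∩ T).Nonempty) (hcl : ∀ x ∈ S, x ∈ T → ∀ y ∈ S, G.Adj x y → y ∈ T) :
    S ⊆ T :=
  (h (S ∩ T) Set.inter_subset_left hne fun x hx y hy hxy =>
    ⟨hy, hcl x hx.1 hx.2 y hy hxy⟩).trans Set.inter_subset_right

theorem fb_exists_comp {V : Type*} (G : SimpleGraph V) (W : Set V) {o : V} (ho : o ∈ W) :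
    ∃ D ⊆ W, o ∈ D ∧ FbConn G D ∧ ∀ x ∈ D, ∀ y ∈ W, G.Adj x y → y ∈ D := by
  have ho' : o ∉ Wᶜ := fun h => h ho
  refine ⟨(G.componentComplMk ho').supp, fun x hx => ?_, ⟨ho', rfl⟩, fb_comp_conn _, ?_⟩
  · by_contra h
    exact hx.1 h
  · intro x hx y hy hxy
    exact ComponentCompl.mem_of_adj (C := G.componentComplMk ho') x y hx (fun h => h hy) hxy

theorem fb_exists_big {V : Type*} {G : SimpleGraph V} (hconn : FbConn G Set.univ) [Infinite V]
    (o : V) (n : ℕ) : ∃ A : Set V, A.Finite ∧ o ∈ A ∧ FbConn G A ∧ n ≤ A.ncard := by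
  induction n with
  | zero => exact ⟨{o}, Set.finite_singleton o, rfl, FbConn.singleton o, Nat.zero_le _⟩
  | succ n ih =>
    obtain ⟨A, hf, ho, hA, hn⟩ := ih
    obtain ⟨x, hx, y, -, hy, hxy⟩ := hconn.exists_boundary (Set.subset_univ A) ⟨o, ho⟩
      (fun h => Set.infinite_univ (hf.subset h))
    refine ⟨A ∪ {y}, hf.union (Set.finite_singleton y), Or.inl ho,
      hA.union_adj (FbConn.singleton y) hx rfl hxy, ?_⟩
    rw [Set.union_singleton, Set.ncard_insert_of_notMem hy hf]
    omega

/-- A finite set with small inner boundary, through which one cannot see the end. -/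
structure FbTrap {V : Type*} (G : SimpleGraph V) (o : V) (n : ℕ) (E : Set V) : Prop where
  fin : E.Finite
  card : n ≤ E.ncard
  conn : FbConn G E
  connc : FbConn G Eᶜ
  mem : o ∈ E
  nbr : ∃ y, y ∉ E ∧ G.Adj o y
  bdry : ∃ s t, ∀ x ∈ E, ∀ y, y ∉ E → G.Adj x y → x = s ∨ x = t

theorem fb_exists_trap {V : Type*} {G : SimpleGraph V} (hconn : FbConn G Set.univ) [Infinite V]
    (htrans : ∀ u v : V, ∃ α : G ≃g G, α u = v)
    (hend : ∀ K : Set V, K.Finite → ∃ C, FbEnd G K C)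
    (hcon : ∀ A : Set V, A.Finite → ∃ s t, ∀ C, FbEnd G {s, t} C → Disjoint A C)
    (o : V) (n : ℕ) : ∃ E, FbTrap G o n E := by
  obtain ⟨A, hAf, hoA, hA, hn⟩ := fb_exists_big hconn o n
  obtain ⟨s, t, hst⟩ := hcon A hAf
  obtain ⟨C, hC⟩ := hend {s, t} (Set.toFinite _)
  have hAC := hst C hC
  obtain ⟨D, hDW, hoD, hD, hDcl⟩ := fb_exists_comp G Cᶜ (o := o)
    (fun h => Set.disjoint_left.1 hAC hoA h)
  have hAD : A ⊆ D := hA.subset_of_closed ⟨o, hoA, hoD⟩ fun x _ hxD y hy hxy =>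
    hDcl x hxD y (fun h => Set.disjoint_left.1 hAC hy h) hxy
  have hDf : D.Finite := hC.cofin.subset hDW
  have hCD : C ⊆ Dᶜ := fun x hx hxD => hDW hxD hx
  have hmeet : ∀ T ⊆ Dᶜ, T.Nonempty → (∀ x ∈ T, ∀ y ∈ Dᶜ, G.Adj x y → y ∈ T) →
      (C ∩ T).Nonempty := by
    intro T hT hne hcl
    by_contra hem
    rw [Set.not_nonempty_iff_eq_empty] at hem
    have := hconn T (Set.subset_univ _) hne (fun x hx y _ hxy => by
      refine hcl x hx y (fun hyD => hT hx ?_) hxy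
      refine hDcl y hyD x (fun hxC => ?_) hxy.symm
      exact (Set.mem_empty_iff_false x).1 (hem ▸ ⟨hxC, hx⟩))
    exact hT (this (Set.mem_univ o)) hoD
  have hsub : ∀ T ⊆ Dᶜ, T.Nonempty → (∀ x ∈ T, ∀ y ∈ Dᶜ, G.Adj x y → y ∈ T) → C ⊆ T :=
    fun T hT hne hcl => hC.conn.subset_of_closed (hmeet T hT hne hcl)
      fun x _ hxT y hy hxy => hcl x hxT y (hCD hy) hxy
  have hDc : FbConn G Dᶜ := by
    intro T hT hne hcl
    have h1 := hsub T hT hne hcl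
    by_contra hn
    rw [Set.not_subset] at hn
    obtain ⟨z, hz, hzT⟩ := hn
    obtain ⟨w, hwC, -, hwT⟩ := hmeet (Dᶜ \ T) Set.sdiff_subset ⟨z, hz, hzT⟩
      (fun x hx y hy hxy => ⟨hy, fun hyT => hx.2 (hcl y hyT x hx.1 hxy.symm)⟩)
    exact hwT (h1 hwC)
  have hbd : ∀ x ∈ D, ∀ y, y ∉ D → G.Adj x y → x = s ∨ x = t := by
    intro x hx y hy hxy
    by_contra hne
    have hyC : y ∈ C := by
      by_contra h
      exact hy (hDcl x hx y h hxy)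
    exact hDW hx (hC.closed y hyC x hne hxy.symm)
  obtain ⟨x, hx, y, -, hy, hxy⟩ := hconn.exists_boundary (Set.subset_univ D) ⟨o, hoD⟩
      (fun h => Set.infinite_univ (hDf.subset h))
  obtain ⟨β, hβ⟩ := htrans x o
  refine ⟨β '' D, hDf.image _, ?_, hD.image β, ?_, ⟨x, hx, hβ⟩, ⟨β y, ?_, ?_⟩, β s, β t, ?_⟩
  · rw [Set.ncard_image_of_injective _ β.injective]
    exact hn.trans (Set.ncard_le_ncard hAD hDf)
  · rw [← Set.image_compl_eq β.bijective]
    exact hDc.image β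
  · rintro ⟨z, hz, e⟩
    exact hy (β.injective e ▸ hz)
  · rw [← hβ]; exact β.map_adj_iff.2 hxy
  · rintro _ ⟨z, hz, rfl⟩ w hw hzw
    obtain ⟨w, rfl⟩ := β.surjective w
    rcases hbd z hz w (fun h => hw ⟨w, h, rfl⟩) (β.map_adj_iff.1 hzw) with rfl | rfl
    exacts [Or.inl rfl, Or.inr rfl]

theorem fb_limit_eq {V : Type*} {G : SimpleGraph V} [G.LocallyFinite] (U : Ultrafilter ℕ)
    (E : ℕ → Set V) (hE : ∀ n, FbConn G (E n)) (L : Set V)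
    (hL : ∀ x, x ∈ L ↔ ∀ᶠ n in (U : Filter ℕ), x ∈ E n) (hLf : L.Finite) (hne : L.Nonempty) :
    ∀ᶠ n in (U : Filter ℕ), E n ⊆ L := by
  have hN : (⋃ x ∈ L, (G.neighborSet x)).Finite :=
    hLf.biUnion fun x _ => Set.toFinite _
  have h1 : ∀ᶠ n in (U : Filter ℕ), ∀ x ∈ L, x ∈ E n :=
    (Filter.eventually_all_finite hLf).2 fun x hx => (hL x).1 hx
  have h2 : ∀ᶠ n in (U : Filter ℕ), ∀ y ∈ (⋃ x ∈ L, (G.neighborSet x)) \ L, y ∉ E n :=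
    (Filter.eventually_all_finite (hN.subset Set.sdiff_subset)).2 fun y hy => by
      rw [Ultrafilter.eventually_not, ← hL]
      exact hy.2
  filter_upwards [h1, h2] with n k1 k2
  obtain ⟨z, hz⟩ := hne
  refine (hE n).subset_of_closed ⟨z, k1 z hz, hz⟩ fun x _ hx y hy hxy => ?_
  by_contra hyL
  refine k2 y ⟨?_, hyL⟩ hy
  simp only [Set.mem_iUnion]
  exact ⟨x, hx, hxy⟩

theorem fb_no_traps {V : Type*} {G : SimpleGraph V} [G.LocallyFinite] [Infinite V]
    (hend : ∀ K : Set V, K.Finite → ∃ C, FbEnd G K C)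
    (o : V) (h : ∀ n, ∃ E, FbTrap G o n E) : False := by
  choose E hE using h
  set U : Ultrafilter ℕ := Filter.hyperfilter ℕ with hU
  set L : Set V := {x | ∀ᶠ n in (U : Filter ℕ), x ∈ E n} with hLdef
  have hL : ∀ x, x ∈ L ↔ ∀ᶠ n in (U : Filter ℕ), x ∈ E n := fun x => Iff.rfl
  have hLc : ∀ x, x ∈ Lᶜ ↔ ∀ᶠ n in (U : Filter ℕ), x ∈ (E n)ᶜ := fun x => by
    simp only [Set.mem_compl_iff, Ultrafilter.eventually_not, hL]
  have hoL : o ∈ L := (hL o).2 (Filter.Eventually.of_forall fun n => (hE n).mem)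
  have hcne : (Lᶜ).Nonempty := by
    by_contra hem
    rw [Set.not_nonempty_iff_eq_empty, Set.compl_empty_iff] at hem
    have h1 : ∀ᶠ n in (U : Filter ℕ), ∀ x ∈ G.neighborSet o, x ∈ E n :=
      (Filter.eventually_all_finite (Set.toFinite _)).2 fun x _ => (hL x).1 (hem ▸ Set.mem_univ x)
    obtain ⟨n, hn⟩ := h1.exists
    obtain ⟨y, hy, hoy⟩ := (hE n).nbr
    exact hy (hn y hoy)
  have hK : {x | x ∈ L ∧ ∃ y, y ∉ L ∧ G.Adj x y}.Finite := by
    by_contra hinf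
    obtain ⟨t, ht, hc⟩ := Set.Infinite.exists_subset_card_eq hinf 3
    have hx : ∀ x ∈ t, ∀ᶠ n in (U : Filter ℕ), x ∈ E n ∧ ∃ y, y ∉ E n ∧ G.Adj x y := by
      intro x hx
      obtain ⟨h1, y, hy, hxy⟩ := ht hx
      filter_upwards [(hL x).1 h1, (hLc y).1 hy] with n k1 k2
      exact ⟨k1, y, k2, hxy⟩
    obtain ⟨n, hn⟩ := ((Filter.eventually_all_finset t).2 hx).exists
    obtain ⟨a, b, hab⟩ := (hE n).bdry
    classical
    have : t ⊆ {a, b} := by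
      intro x hx
      obtain ⟨h1, y, hy, hxy⟩ := hn x hx
      simpa using hab x h1 y hy hxy
    have := Finset.card_le_card this
    have := Finset.card_le_two (a := a) (b := b)
    omega
  obtain ⟨C, hC⟩ := hend _ hK
  have hcl : ∀ x ∈ C, x ∈ L → ∀ y ∈ C, G.Adj x y → y ∈ L := by
    intro x hx hxL y hy hxy
    by_contra hyL
    exact hC.sub hx ⟨hxL, y, hyL, hxy⟩
  by_cases hne : (C ∩ L).Nonempty
  · have hsub := hC.conn.subset_of_closed hne hcl
    have hfin : (Lᶜ).Finite := hC.cofin.subset (Set.compl_subset_compl.2 hsub)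
    obtain ⟨n, hn⟩ := (fb_limit_eq U (fun n => (E n)ᶜ) (fun n => (hE n).connc) _ hLc hfin
      hcne).exists
    exact Set.infinite_univ ((((hE n).fin.union (hfin.subset hn))).subset
      (fun x _ => by by_cases h : x ∈ E n; exacts [Or.inl h, Or.inr h]))
  · have hfin : L.Finite := hC.cofin.subset fun x hx hxC => hne ⟨x, hxC, hx⟩
    have h1 := fb_limit_eq U E (fun n => (hE n).conn) _ hL hfin ⟨o, hoL⟩
    have h2 : ∀ᶠ n in (U : Filter ℕ), L.ncard + 1 ≤ n := by
      refine Filter.Eventually.filter_mono ?_ (Filter.eventually_ge_atTop (L.ncard + 1))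
      rw [← Nat.cofinite_eq_atTop]
      exact Filter.hyperfilter_le_cofinite
    obtain ⟨n, hn, hn2⟩ := (h1.and h2).exists
    have := Set.ncard_le_ncard hn hfin
    have := (hE n).card
    omega

theorem fb_good_set {V : Type*} {G : SimpleGraph V} [G.LocallyFinite] [Infinite V]
    (hconn : FbConn G Set.univ) (htrans : ∀ u v : V, ∃ α : G ≃g G, α u = v)
    (hend : ∀ K : Set V, K.Finite → ∃ C, FbEnd G K C) :
    ∃ A : Set V, A.Finite ∧ ∀ s t, ∃ C, FbEnd G {s, t} C ∧ (A ∩ C).Nonempty := by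
  by_contra! hcon
  obtain ⟨o⟩ : Nonempty V := inferInstance
  refine fb_no_traps hend o (fb_exists_trap hconn htrans hend ?_ o)
  intro A hA
  obtain ⟨s, t, hst⟩ := hcon A hA
  refine ⟨s, t, fun C hC => ?_⟩
  rw [Set.disjoint_iff_inter_eq_empty]
  simpa [Set.not_nonempty_iff_eq_empty] using hst C hC


/-! ### Part 5: Menger's theorem -/

/-- `k` disjoint walks from `A` to `B`. -/
def FbLink {V : Type*} (H : SimpleGraph V) (A B : Set V) (k : ℕ) : Prop :=
  ∃ (a b : Fin k → V) (p : ∀ i, H.Walk (a i) (b i)), (∀ i, a i ∈ A) ∧ (∀ i, b i ∈ B) ∧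
    ∀ i j, i ≠ j → ∀ z, z ∈ (p i).support → z ∉ (p j).support

/-- `S` separates `A` from `B`. -/
def FbSep {V : Type*} (H : SimpleGraph V) (A B : Set V) (S : Finset V) : Prop :=
  ∀ a ∈ A, ∀ b ∈ B, ∀ p : H.Walk a b, ∃ x ∈ S, x ∈ p.support

/-- Vertices reachable from `A` while avoiding `S`. -/
def fbR {V : Type*} (H : SimpleGraph V) (A : Set V) (S : Finset V) : Set V :=
  {z | ∃ a ∈ A, ∃ p : H.Walk a z, ∀ u ∈ p.support, u ∉ S}

theorem fbR_adj {V : Type*} {H : SimpleGraph V} {A : Set V} {S : Finset V} {u v : V}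
    (hu : u ∈ fbR H A S) (h : H.Adj u v) (hv : v ∉ S) : v ∈ fbR H A S := by
  obtain ⟨a, ha, p, hp⟩ := hu
  refine ⟨a, ha, p.concat h, fun z hz => ?_⟩
  rw [Walk.support_concat] at hz
  simp only [List.mem_append, List.mem_singleton] at hz
  rcases hz with hz | rfl
  exacts [hp z hz, hv]

theorem fbR_self {V : Type*} {H : SimpleGraph V} {A : Set V} {S : Finset V} {u : V}
    (hu : u ∈ A) (hS : u ∉ S) : u ∈ fbR H A S :=
  ⟨u, hu, Walk.nil, by simpa using hS⟩

theorem fbR_notMem {V : Type*} {H : SimpleGraph V} {A : Set V} {S : Finset V} {u : V}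
    (hu : u ∈ fbR H A S) : u ∉ S := by
  obtain ⟨a, ha, p, hp⟩ := hu
  exact hp u p.end_mem_support

theorem fbR_disjoint {V : Type*} {H : SimpleGraph V} {A B : Set V} {S : Finset V}
    (h : FbSep H A B S) : ∀ z ∈ fbR H A S, z ∉ fbR H B S := by
  rintro z ⟨a, ha, p, hp⟩ ⟨b, hb, q, hq⟩
  obtain ⟨x, hxS, hx⟩ := h a ha b hb (p.append q.reverse)
  rw [Walk.mem_support_append_iff, Walk.support_reverse, List.mem_reverse] at hx
  rcases hx with hx | hx
  exacts [hp x hx hxS, hq x hx hxS]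

theorem fb_menger_half {V : Type*} {H H' : SimpleGraph V} {A B : Set V} {S : Finset V} {x y : V}
    (hadj : ∀ u v, H.Adj u v → s(u, v) ≠ s(x, y) → H'.Adj u v)
    (hdis : ∀ z ∈ fbR H' A S, z ∉ fbR H' B S) (hy : y ∈ fbR H' B S)
    {a b : V} (p : H.Walk a b) (hb : b ∈ B ∨ b = x ∨ b ∈ S) (ha : a ∈ fbR H' A S ∨ a ∈ S) :
    ∃ c, (c = x ∨ c ∈ S) ∧ ∃ q : H'.Walk a c, (∀ z ∈ q.support, z ∈ p.support) ∧
      ∀ z ∈ q.support, z = c ∨ (z ∈ fbR H' A S ∧ z ≠ x ∧ z ∉ S) := by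
  induction p with
  | @nil u =>
    by_cases hP : u = x ∨ u ∈ S
    · exact ⟨u, hP, Walk.nil, by simp, by simp⟩
    · rcases ha with ha | ha
      · rcases hb with hb | hb
        · exact absurd (fbR_self hb (fbR_notMem ha)) (hdis u ha)
        · exact absurd hb hP
      · exact absurd (Or.inr ha) hP
  | @cons u v w h q ih =>
    by_cases hP : u = x ∨ u ∈ S
    · exact ⟨u, hP, Walk.nil, by simp, by simp⟩
    · push Not at hP
      rcases ha with ha | ha
      · have huy : u ≠ y := fun e => hdis u ha (e ▸ hy)
        have h' : H'.Adj u v := by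
          refine hadj u v h fun e => ?_
          rw [Sym2.eq_iff] at e
          rcases e with ⟨e, -⟩ | ⟨e, -⟩
          exacts [hP.1 e, huy e]
        have hv : v ∈ fbR H' A S ∨ v ∈ S := by
          by_cases hvS : v ∈ S
          · exact Or.inr hvS
          · exact Or.inl (fbR_adj ha h' hvS)
        obtain ⟨c, hc, q', h1, h2⟩ := ih hb hv
        refine ⟨c, hc, Walk.cons h' q', ?_, ?_⟩
        · intro z hz
          rw [Walk.support_cons, List.mem_cons] at hz ⊢
          exact hz.imp id (h1 z)
        · intro z hz
          rw [Walk.support_cons, List.mem_cons] at hz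
          rcases hz with rfl | hz
          · exact Or.inr ⟨ha, hP⟩
          · exact h2 z hz
      · exact absurd ha hP.2

theorem fb_menger_cross {V : Type*} {H H' : SimpleGraph V} {A B : Set V} {S : Finset V} {x y : V}
    (hadj : ∀ u v, H.Adj u v → s(u, v) ≠ s(x, y) → H'.Adj u v)
    (hdis : ∀ z ∈ fbR H' A S, z ∉ fbR H' B S)
    {a b : V} (p : H.Walk a b) (hp : p.IsPath) (hpS : ∀ z ∈ p.support, z ∉ S)
    (hb : b ∈ B) (ha : a ∈ fbR H' A S) :
    (x ∈ fbR H' A S ∧ y ∈ fbR H' B S) ∨ (y ∈ fbR H' A S ∧ x ∈ fbR H' B S) := by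
  induction p with
  | @nil u => exact absurd (fbR_self hb (fbR_notMem ha)) (hdis u ha)
  | @cons u v w h q ih =>
    rw [Walk.cons_isPath_iff] at hp
    have hqS : ∀ z ∈ q.support, z ∉ S := fun z hz => hpS z (by simp [hz])
    by_cases hv : v ∈ fbR H' A S
    · exact ih hp.1 hqS hb hv
    · have he : s(u, v) = s(x, y) := by
        by_contra hne
        exact hv (fbR_adj ha (hadj u v h hne) (hqS v q.start_mem_support))
      have hvB : v ∈ fbR H' B S := by
        have hq : ∀ e ∈ q.edges, e ∈ H'.edgeSet := by
          intro e heq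
          induction e with | _ c d =>
          refine hadj c d (q.adj_of_mem_edges heq) fun e2 => ?_
          rw [← he] at e2
          have := (Sym2.eq_iff.1 e2)
          rcases this with ⟨rfl, -⟩ | ⟨-, rfl⟩
          · exact hp.2 (q.fst_mem_support_of_mem_edges heq)
          · exact hp.2 (q.snd_mem_support_of_mem_edges heq)
        refine ⟨w, hb, (q.transfer H' hq).reverse, fun z hz => ?_⟩
        rw [Walk.support_reverse, List.mem_reverse, Walk.support_transfer] at hz
        exact hqS z hz
      rw [Sym2.eq_iff] at he
      rcases he with ⟨rfl, rfl⟩ | ⟨rfl, rfl⟩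
      exacts [Or.inl ⟨ha, hvB⟩, Or.inr ⟨ha, hvB⟩]

theorem fb_menger_side {V : Type*} [DecidableEq V] {H H' : SimpleGraph V} {A B : Set V}
    {S : Finset V} {x y : V} {k : ℕ} (hle : H' ≤ H)
    (hadj : ∀ u v, H.Adj u v → s(u, v) ≠ s(x, y) → H'.Adj u v)
    (hdis : ∀ z ∈ fbR H' A S, z ∉ fbR H' B S) (hy : y ∈ fbR H' B S)
    (hsep : ∀ T : Finset V, T.card < k → ¬ FbSep H A B T)
    (ih : (∀ T : Finset V, T.card < k → ¬ FbSep H' A (insert x S : Finset V) T) →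
      FbLink H' A (insert x S : Finset V) k) :
    ∃ (a c : Fin k → V) (p : ∀ i, H'.Walk (a i) (c i)), (∀ i, a i ∈ A) ∧
      (∀ i, c i = x ∨ c i ∈ S) ∧
      (∀ i j, i ≠ j → ∀ z, z ∈ (p i).support → z ∉ (p j).support) ∧
      ∀ i, ∀ z ∈ (p i).support, z = c i ∨ (z ∈ fbR H' A S ∧ z ≠ x ∧ z ∉ S) := by
  have hA : ∀ a ∈ A, a ∈ fbR H' A S ∨ a ∈ S := fun a ha => by
    by_cases h : a ∈ S
    exacts [Or.inr h, Or.inl (fbR_self ha h)]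
  obtain ⟨a, b, p, ha, hb, hd⟩ := ih (by
    intro T hT hs
    refine hsep T hT fun a ha b hb p => ?_
    obtain ⟨c, hc, q, hq, -⟩ := fb_menger_half hadj hdis hy p (Or.inl hb) (hA a ha)
    obtain ⟨z, hzT, hz⟩ := hs a ha c (by simpa using hc) q
    exact ⟨z, hzT, hq z hz⟩)
  have := fun i => fb_menger_half hadj hdis hy ((p i).mapLe hle)
    (Or.inr (by simpa using hb i)) (hA _ (ha i))
  choose c hc q h1 h2 using this
  refine ⟨a, c, q, ha, hc, ?_, h2⟩
  intro i j hij z hz hz'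
  have k1 := h1 i z hz
  have k2 := h1 j z hz'
  rw [Walk.support_mapLe_eq_support] at k1 k2
  exact hd i j hij z k1 k2

theorem fb_menger_surj {V : Type*} [DecidableEq V] {S : Finset V} {x : V} {k : ℕ}
    (hS : S.card < k) (c : Fin k → V) (hc : ∀ i, c i = x ∨ c i ∈ S)
    (hinj : Function.Injective c) (v : V) (hv : v = x ∨ v ∈ S) : ∃ i, c i = v := by
  have h1 : Finset.univ.image c ⊆ insert x S := by
    intro z hz
    obtain ⟨i, -, rfl⟩ := Finset.mem_image.1 hz
    simpa using hc i
  have h2 : Finset.univ.image c = insert x S := by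
    refine Finset.eq_of_subset_of_card_le h1 ?_
    rw [Finset.card_image_of_injective _ hinj, Finset.card_univ, Fintype.card_fin]
    exact (Finset.card_insert_le _ _).trans hS
  have : v ∈ Finset.univ.image c := by rw [h2]; simpa using hv
  obtain ⟨i, -, hi⟩ := Finset.mem_image.1 this
  exact ⟨i, hi⟩

theorem fb_menger_step {V : Type*} {H H' : SimpleGraph V} {A B : Set V}
    {S : Finset V} {x y : V} {k : ℕ} (hle : H' ≤ H) (hxy : H.Adj x y)
    (hadj : ∀ u v, H.Adj u v → s(u, v) ≠ s(x, y) → H'.Adj u v)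
    (hdis : ∀ z ∈ fbR H' A S, z ∉ fbR H' B S) (hx : x ∈ fbR H' A S) (hy : y ∈ fbR H' B S)
    (hS : S.card < k)
    (hsep : ∀ T : Finset V, T.card < k → ¬ FbSep H A B T)
    (ih : ∀ A B : Set V, (∀ T : Finset V, T.card < k → ¬ FbSep H' A B T) → FbLink H' A B k) :
    FbLink H A B k := by
  classical
  obtain ⟨a, c, p, ha, hc, hpd, hp⟩ := fb_menger_side hle hadj hdis hy hsep (ih _ _)
  obtain ⟨b, d, q, hb, hd, hqd, hq⟩ := fb_menger_side (A := B) (B := A) (x := y) (y := x) hle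
    (fun u v h hne => hadj u v h (by rwa [Sym2.eq_swap (a := x)])) (fun z hz hz' => hdis z hz' hz)
    hx (fun T hT hs => hsep T hT (fun a ha b hb w => by
      obtain ⟨z, hz, hz'⟩ := hs b hb a ha w.reverse
      exact ⟨z, hz, by simpa using hz'⟩)) (ih _ _)
  have hxS := fbR_notMem hx
  have hyS := fbR_notMem hy
  have hne : x ≠ y := hxy.ne
  have hcinj : Function.Injective c := by
    intro i j e
    by_contra hij
    exact hpd i j hij (c i) (p i).end_mem_support (by rw [e]; exact (p j).end_mem_support)
  have hdinj : Function.Injective d := by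
    intro i j e
    by_contra hij
    exact hqd i j hij (d i) (q i).end_mem_support (by rw [e]; exact (q j).end_mem_support)
  have hm : ∀ i, ∃ j, (c i = x ∧ d j = y) ∨ (c i ∈ S ∧ d j = c i) := by
    intro i
    rcases hc i with h | h
    · obtain ⟨j, hj⟩ := fb_menger_surj hS d hd hdinj y (Or.inl rfl)
      exact ⟨j, Or.inl ⟨h, hj⟩⟩
    · obtain ⟨j, hj⟩ := fb_menger_surj hS d hd hdinj (c i) (Or.inr h)
      exact ⟨j, Or.inr ⟨h, hj⟩⟩
  choose m hm using hm
  have hminj : Function.Injective m := by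
    intro i j e
    apply hcinj
    rcases hm i with ⟨h1, h2⟩ | ⟨h1, h2⟩ <;> rcases hm j with ⟨h3, h4⟩ | ⟨h3, h4⟩
    · rw [h1, h3]
    · rw [e, h4] at h2
      exact absurd (h2 ▸ h3) hyS
    · rw [e, h4] at h2
      exact absurd (h2 ▸ h1) hyS
    · rw [← h2, ← h4, e]
  have hw : ∀ i, ∃ w : H.Walk (a i) (b (m i)), ∀ z ∈ w.support,
      z ∈ (p i).support ∨ z ∈ (q (m i)).support := by
    intro i
    have hcd : c i = d (m i) ∨ H.Adj (c i) (d (m i)) := by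
      rcases hm i with ⟨h1, h2⟩ | ⟨h1, h2⟩
      · right; rw [h1, h2]; exact hxy
      · left; exact h2.symm
    have : ∃ e : H.Walk (c i) (d (m i)), ∀ z ∈ e.support, z = c i ∨ z = d (m i) := by
      rcases hcd with h | h
      · rw [← h]; exact ⟨Walk.nil, by simp⟩
      · exact ⟨Walk.cons h Walk.nil, by simp⟩
    obtain ⟨e, he⟩ := this
    refine ⟨(((p i).mapLe hle).append e).append ((q (m i)).mapLe hle).reverse, fun z hz => ?_⟩
    simp only [Walk.mem_support_append_iff, Walk.support_reverse, List.mem_reverse,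
      Walk.support_mapLe_eq_support] at hz
    rcases hz with (hz | hz) | hz
    · exact Or.inl hz
    · rcases he z hz with rfl | rfl
      exacts [Or.inl (p i).end_mem_support, Or.inr (q (m i)).end_mem_support]
    · exact Or.inr hz
  choose w hw using hw
  have hcross : ∀ i j, i ≠ j → ∀ z, z ∈ (p i).support → z ∉ (q (m j)).support := by
    intro i j hij z hz hz'
    rcases hp i z hz with h1 | ⟨h1, h2, h3⟩
    · rcases hq _ z hz' with h4 | ⟨h4, h5, h6⟩
      · rcases hm j with ⟨h7, h8⟩ | ⟨h7, h8⟩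
        · rw [h8] at h4
          rcases hc i with h9 | h9
          · exact hne (h9.symm.trans (h1.symm.trans h4))
          · exact hyS (by rw [← h4, h1]; exact h9)
        · exact hij (hcinj (h1.symm.trans (h4.trans h8)))
      · rcases hc i with h9 | h9
        · refine hdis z ?_ h4
          rw [h1, h9]; exact hx
        · exact h6 (h1 ▸ h9)
    · rcases hq _ z hz' with h4 | ⟨h4, h5, h6⟩
      · rcases hd (m j) with h9 | h9
        · refine hdis z h1 ?_
          rw [h4, h9]; exact hy
        · exact h3 (h4 ▸ h9)
      · exact hdis z h1 h4
  refine ⟨a, fun i => b (m i), w, ha, fun i => hb _, ?_⟩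
  intro i j hij z hz hz'
  rcases hw i z hz with h1 | h1 <;> rcases hw j z hz' with h2 | h2
  · exact hpd i j hij z h1 h2
  · exact hcross i j hij z h1 h2
  · exact hcross j i hij.symm z h2 h1
  · exact hqd _ _ (fun e => hij (hminj e)) z h1 h2

theorem fb_menger {V : Type*} (k : ℕ) (n : ℕ) : ∀ (H : SimpleGraph V), H.edgeSet.Finite →
    H.edgeSet.ncard = n → ∀ A B : Set V,
    (∀ T : Finset V, T.card < k → ¬ FbSep H A B T) → FbLink H A B k := by
  classical
  induction n with
  | zero =>
    intro H hf hn A B hsep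
    rw [Set.ncard_eq_zero hf, SimpleGraph.edgeSet_eq_empty] at hn
    subst hn
    have hfin : ∃ T : Finset V, (T : Set V) ⊆ A ∩ B ∧ T.card = k := by
      by_cases hinf : (A ∩ B).Infinite
      · exact hinf.exists_subset_card_eq k
      · rw [Set.not_infinite] at hinf
        have hk : k ≤ hinf.toFinset.card := by
          by_contra! hlt
          refine hsep _ hlt fun a ha b hb p => ?_
          cases p with
          | nil => exact ⟨a, by simpa using ⟨ha, hb⟩, by simp⟩
          | cons h _ => exact absurd h (by simp)
        obtain ⟨T, hT, hc⟩ := Finset.exists_subset_card_eq hk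
        exact ⟨T, fun z hz => by simpa using hT hz, hc⟩
    obtain ⟨T, hT, hc⟩ := hfin
    let f := (T.equivFinOfCardEq hc).symm
    refine ⟨fun i => f i, fun i => f i, fun i => Walk.nil, fun i => (hT (f i).2).1,
      fun i => (hT (f i).2).2, ?_⟩
    intro i j hij z hz hz'
    simp only [Walk.support_nil, List.mem_singleton] at hz hz'
    exact hij (f.injective (Subtype.ext (hz.symm.trans hz')))
  | succ n ih =>
    intro H hf hn A B hsep
    have hne : H.edgeSet.Nonempty := by
      rw [← Set.ncard_pos hf]; omega
    obtain ⟨e, he⟩ := hne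
    induction e with | _ x y =>
    have hxy : H.Adj x y := he
    set H' := H.deleteEdges {s(x, y)} with hH'
    have hle : H' ≤ H := H.deleteEdges_le _
    have hadj : ∀ u v, H.Adj u v → s(u, v) ≠ s(x, y) → H'.Adj u v := by
      intro u v h hne
      rw [hH', SimpleGraph.deleteEdges_adj]
      exact ⟨h, by simpa using hne⟩
    have hes : H'.edgeSet = H.edgeSet \ {s(x, y)} := SimpleGraph.edgeSet_deleteEdges _
    have hf' : H'.edgeSet.Finite := by rw [hes]; exact hf.subset Set.sdiff_subset
    have hn' : H'.edgeSet.ncard = n := by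
      rw [hes, Set.ncard_sdiff_singleton_of_mem he]; omega
    have ih' := ih H' hf' hn'
    by_cases hs : ∀ T : Finset V, T.card < k → ¬ FbSep H' A B T
    · obtain ⟨a, b, p, ha, hb, hd⟩ := ih' A B hs
      refine ⟨a, b, fun i => (p i).mapLe hle, ha, hb, ?_⟩
      intro i j hij z hz hz'
      rw [Walk.support_mapLe_eq_support] at hz hz'
      exact hd i j hij z hz hz'
    · push Not at hs
      obtain ⟨S, hS, hSs⟩ := hs
      have hdis := fbR_disjoint hSs
      have hns := hsep S hS
      unfold FbSep at hns
      push Not at hns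
      obtain ⟨a, ha, b, hb, p, hp⟩ := hns
      have hpS : ∀ z ∈ p.bypass.support, z ∉ S := fun z hz hzS =>
        hp z hzS (p.support_bypass_subset_support hz)
      rcases fb_menger_cross hadj hdis p.bypass p.bypass_isPath hpS hb
        (fbR_self ha (hpS a p.bypass.start_mem_support)) with ⟨h1, h2⟩ | ⟨h1, h2⟩
      · exact fb_menger_step hle hxy hadj hdis h1 h2 hS hsep ih'
      · exact fb_menger_step hle hxy.symm
          (fun u v h hne => hadj u v h (by rwa [Sym2.eq_swap (a := x)])) hdis h1 h2 hS hsep ih'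


/-! ### Part 6: three disjoint rays -/

/-- Iterated closed neighbourhoods. -/
def fbN {V : Type*} (G : SimpleGraph V) (A : Set V) : ℕ → Set V
  | 0 => A
  | n + 1 => fbN G A n ∪ ⋃ x ∈ fbN G A n, G.neighborSet x

theorem fbN_finite {V : Type*} {G : SimpleGraph V} [G.LocallyFinite] {A : Set V} (hA : A.Finite)
    (n : ℕ) : (fbN G A n).Finite := by
  induction n with
  | zero => exact hA
  | succ n ih => exact ih.union (ih.biUnion fun x _ => Set.toFinite _)

theorem fbN_adj {V : Type*} {G : SimpleGraph V} {A : Set V} {n : ℕ} {x y : V}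
    (hx : x ∈ fbN G A n) (h : G.Adj x y) : y ∈ fbN G A (n + 1) := by
  refine Or.inr ?_
  simp only [Set.mem_iUnion]
  exact ⟨x, hx, h⟩

theorem fbN_mono {V : Type*} {G : SimpleGraph V} {A : Set V} : Monotone (fbN G A) :=
  monotone_nat_of_le_succ fun _ => Set.subset_union_left

theorem fbN_getVert {V : Type*} {G : SimpleGraph V} {A : Set V} {a b : V} (p : G.Walk a b)
    (ha : a ∈ A) (t : ℕ) : p.getVert t ∈ fbN G A t := by
  induction t with
  | zero => rw [Walk.getVert_zero]; exact ha
  | succ t ih =>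
    by_cases h : t < p.length
    · exact fbN_adj ih (p.adj_getVert_succ h)
    · rw [p.getVert_of_length_le (by omega)] at ih ⊢
      exact Or.inl ih

theorem fb_stage {V : Type*} {G : SimpleGraph V} [G.LocallyFinite] [Infinite V] {A : Set V}
    (hA : A.Finite) (h : ∀ s t, ∃ C, FbEnd G {s, t} C ∧ (A ∩ C).Nonempty) (n : ℕ) :
    ∃ r : Fin 3 → ℕ → V, (∀ i t, r i t ∈ fbN G A t) ∧
      (∀ i t, t < n → G.Adj (r i t) (r i (t + 1))) ∧
      ∀ i j s t, s ≤ n → t ≤ n → r i s = r j t → i = j ∧ s = t := by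
  classical
  set M := fbN G A (n + 1) with hM
  set H : SimpleGraph V := G ⊓ SimpleGraph.fromRel (fun u v => u ∈ M ∧ v ∈ M) with hH
  have hle : H ≤ G := inf_le_left
  have hHf : H.edgeSet.Finite := by
    have hMf : M.Finite := fbN_finite hA _
    refine ((hMf.prod hMf).image (fun x : V × V => s(x.1, x.2))).subset ?_
    intro e he
    induction e with | _ x y =>
    have he' : H.Adj x y := he
    simp only [hH, SimpleGraph.inf_adj, SimpleGraph.fromRel_adj] at he'
    obtain ⟨-, -, h1⟩ := he'
    have h2 : x ∈ M ∧ y ∈ M := by tauto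
    exact ⟨(x, y), h2, rfl⟩
  have hsep : ∀ T : Finset V, T.card < 3 → ¬ FbSep H A (fbN G A n)ᶜ T := by
    intro T hT hs
    obtain ⟨s, t, hst⟩ : ∃ s t, T ⊆ {s, t} := by
      obtain ⟨o⟩ : Nonempty V := inferInstance
      have : T.card = 0 ∨ T.card = 1 ∨ T.card = 2 := by omega
      rcases this with h | h | h
      · exact ⟨o, o, by simp [Finset.card_eq_zero.1 h]⟩
      · obtain ⟨s, rfl⟩ := Finset.card_eq_one.1 h
        exact ⟨s, s, by simp⟩
      · obtain ⟨s, t, -, rfl⟩ := Finset.card_eq_two.1 h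
        exact ⟨s, t, subset_rfl⟩
    obtain ⟨C, hC, a, haA, haC⟩ := h s t
    have hCT : ∀ z ∈ C, z ∉ T := fun z hz hzT => hC.sub hz (by simpa using hst hzT)
    have key : C ⊆ {z | z ∈ fbN G A n ∧ ∃ p : H.Walk a z, ∀ u ∈ p.support, u ∈ C} := by
      have hin : ∀ z, (∃ p : H.Walk a z, ∀ u ∈ p.support, u ∈ C) → z ∈ fbN G A n := by
        rintro z ⟨p, hp⟩
        by_contra hz
        obtain ⟨u, huT, hu⟩ := hs a haA z hz p
        exact hCT u (hp u hu) huT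
      refine hC.conn.subset_of_closed ⟨a, haC, hin a ⟨Walk.nil, by simpa using haC⟩, Walk.nil,
        by simpa using haC⟩ ?_
      rintro x hx ⟨hxN, p, hp⟩ y hy hxy
      have hH : H.Adj x y := by
        simp only [hH, SimpleGraph.inf_adj, SimpleGraph.fromRel_adj]
        exact ⟨hxy, hxy.ne, Or.inl ⟨Or.inl hxN, fbN_adj hxN hxy⟩⟩
      have hw : ∃ p : H.Walk a y, ∀ u ∈ p.support, u ∈ C := by
        refine ⟨p.concat hH, fun z hz => ?_⟩
        rw [Walk.support_concat] at hz
        simp only [List.mem_append, List.mem_singleton] at hz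
        rcases hz with hz | rfl
        exacts [hp z hz, hy]
      exact ⟨hin y hw, hw⟩
    exact hC.inf ((fbN_finite hA n).subset fun z hz => (key hz).1)
  obtain ⟨a, b, p, ha, hb, hd⟩ := fb_menger 3 _ H hHf rfl A _ hsep
  let q : ∀ i, G.Walk (a i) (b i) := fun i => ((p i).mapLe hle).bypass
  have hqs : ∀ i, ∀ z ∈ (q i).support, z ∈ (p i).support := by
    intro i z hz
    have := ((p i).mapLe hle).support_bypass_subset_support hz
    rwa [Walk.support_mapLe_eq_support] at this
  have hlen : ∀ i, n < (q i).length := by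
    intro i
    by_contra! hl
    have := fbN_getVert (q i) (ha i) (q i).length
    rw [Walk.getVert_length] at this
    exact hb i (fbN_mono hl this)
  refine ⟨fun i t => (q i).getVert t, fun i t => fbN_getVert (q i) (ha i) t,
    fun i t ht => (q i).adj_getVert_succ (ht.trans (hlen i)), ?_⟩
  intro i j s t hs ht e
  have hij : i = j := by
    by_contra hij
    refine hd i j hij _ (hqs i _ ((q i).getVert_mem_support s)) ?_
    have := hqs j _ ((q j).getVert_mem_support t)
    exact (show (q i).getVert s = (q j).getVert t from e) ▸ this
  subst hij
  refine ⟨rfl, (Walk.bypass_isPath _).getVert_injOn ?_ ?_ e⟩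
  · exact (hs.trans (hlen i).le)
  · exact (ht.trans (hlen i).le)

theorem fb_rays {V : Type*} {G : SimpleGraph V} [G.LocallyFinite] [Infinite V] {A : Set V}
    (hA : A.Finite) (h : ∀ s t, ∃ C, FbEnd G {s, t} C ∧ (A ∩ C).Nonempty) :
    ∃ r : Fin 3 → ℕ → V, (∀ i t, G.Adj (r i t) (r i (t + 1))) ∧
      ∀ i j s t, r i s = r j t → i = j ∧ s = t := by
  choose r hN hadj hinj using fb_stage hA h
  set U : Ultrafilter ℕ := Filter.hyperfilter ℕ with hU
  have hge : ∀ m, ∀ᶠ n in (U : Filter ℕ), m ≤ n := by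
    intro m
    refine Filter.Eventually.filter_mono ?_ (Filter.eventually_ge_atTop m)
    rw [← Nat.cofinite_eq_atTop]
    exact Filter.hyperfilter_le_cofinite
  have hlim : ∀ i t, ∃ v, ∀ᶠ n in (U : Filter ℕ), r n i t = v := by
    intro i t
    have h1 : (⋃ v ∈ fbN G A t, {n | r n i t = v}) ∈ U := by
      refine Filter.mem_of_superset Filter.univ_mem fun n _ => ?_
      simp only [Set.mem_iUnion]
      exact ⟨_, hN n i t, rfl⟩
    obtain ⟨v, -, hv⟩ := (Ultrafilter.finite_biUnion_mem_iff (fbN_finite hA t)).1 h1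
    exact ⟨v, hv⟩
  choose ρ hρ using hlim
  refine ⟨ρ, fun i t => ?_, fun i j s t e => ?_⟩
  · obtain ⟨n, h1, h2, h3⟩ := ((hρ i t).and ((hρ i (t + 1)).and (hge (t + 1)))).exists
    rw [← h1, ← h2]
    exact hadj n i t h3
  · obtain ⟨n, h1, h2, h3, h4⟩ := ((hρ i s).and ((hρ j t).and ((hge s).and (hge t)))).exists
    rw [← h1, ← h2] at e
    exact hinj n i j s t h3 h4 e


/-! ### Part 7: building the obstruction from the rays -/

theorem fb_interval {V : Type*} {G : SimpleGraph V} (f : ℕ → V) (l m : ℕ)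
    (h : ∀ t, l ≤ t → t < m → G.Adj (f t) (f (t + 1))) : FbConn G (f '' Set.Icc l m) := by
  induction m with
  | zero =>
    rcases Nat.eq_zero_or_pos l with rfl | hl
    · simpa using FbConn.singleton (G := G) (f 0)
    · have : f '' Set.Icc l 0 = ∅ := by
        rw [Set.Icc_eq_empty (by omega), Set.image_empty]
      rw [this]
      exact fun T hT _ _ => Set.empty_subset _
  | succ m ih =>
    rcases Nat.lt_trichotomy l (m + 1) with hl | hl | hl
    · have h1 := (ih fun t h1 h2 => h t h1 (by omega)).union_adj (FbConn.singleton (f (m + 1)))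
        (z := f m) ⟨m, ⟨by omega, le_rfl⟩, rfl⟩ rfl (h m (by omega) (by omega))
      have : f '' Set.Icc l (m + 1) = f '' Set.Icc l m ∪ {f (m + 1)} := by
        rw [← Set.image_singleton, ← Set.image_union]
        congr 1
        ext t
        simp only [Set.mem_Icc, Set.mem_union, Set.mem_singleton_iff]
        omega
      rwa [this]
    · subst hl
      simpa using FbConn.singleton (G := G) (f (m + 1))
    · have : f '' Set.Icc l (m + 1) = ∅ := by
        rw [Set.Icc_eq_empty (by omega), Set.image_empty]
      rw [this]
      exact fun T hT _ _ => Set.empty_subset _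

/-- A sequence of length `n` inside `C` from `T` to `U`. -/
def FbSeq {V : Type*} (G : SimpleGraph V) (C T U : Set V) (n : ℕ) (f : ℕ → V) : Prop :=
  f 0 ∈ T ∧ f n ∈ U ∧ (∀ t ≤ n, f t ∈ C) ∧ ∀ t < n, G.Adj (f t) (f (t + 1))

theorem fb_exists_seq {V : Type*} {G : SimpleGraph V} {C T U : Set V} (hC : FbConn G C)
    (hT : (C ∩ T).Nonempty) (hU : (C ∩ U).Nonempty) : ∃ n f, FbSeq G C T U n f := by
  obtain ⟨a, haC, haT⟩ := hT
  obtain ⟨b, hbC, hbU⟩ := hU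
  have := hC.subset_of_closed (T := {z | ∃ n f, FbSeq G C T {z} n f})
    ⟨a, haC, 0, fun _ => a, haT, rfl, fun _ _ => haC, fun t ht => absurd ht (by omega)⟩ (by
      rintro x hx ⟨n, f, h0, hn, hfC, hadj⟩ y hy hxy
      refine ⟨n + 1, fun t => if t ≤ n then f t else y, ?_, ?_, ?_, ?_⟩
      · simpa using h0
      · simp
      · intro t ht
        by_cases h : t ≤ n
        · simpa [h] using hfC t h
        · simpa [h] using hy
      · intro t ht
        rcases Nat.lt_or_ge t n with h | h
        · have h1 : t ≤ n := h.le
          have h2 : t + 1 ≤ n := h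
          simp only [h1, h2, if_true]
          exact hadj t h
        · have h1 : t = n := by omega
          subst h1
          simp only [le_refl, if_true, Nat.not_succ_le_self, if_false]
          rw [Set.mem_singleton_iff.1 hn]
          exact hxy)
  obtain ⟨n, f, h0, hn, h1, h2⟩ := this hbC
  exact ⟨n, f, h0, (Set.mem_singleton_iff.1 hn) ▸ hbU, h1, h2⟩

/-- A connected finite set meeting `T ∪ U` exactly in two removable vertices, one in each. -/
structure FbBridge {V : Type*} (G : SimpleGraph V) (T U P : Set V) (a b : V) : Prop where
  fin : P.Finite
  aT : a ∈ T
  bU : b ∈ U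
  aP : a ∈ P
  bP : b ∈ P
  onlyT : ∀ z ∈ P, z ∈ T → z = a
  onlyU : ∀ z ∈ P, z ∈ U → z = b
  conn : FbConn G P
  conna : FbConn G (P \ {a})
  connb : FbConn G (P \ {b})

theorem fb_connector {V : Type*} {G : SimpleGraph V} {C T U : Set V} (hC : FbConn G C)
    (hTU : Disjoint T U) (hT : (C ∩ T).Nonempty) (hU : (C ∩ U).Nonempty) :
    ∃ P a b, P ⊆ C ∧ FbBridge G T U P a b := by
  classical
  have hex := fb_exists_seq hC hT hU
  obtain ⟨f, h0, hn, hfC, hadj⟩ := Nat.find_spec hex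
  have hmin : ∀ m < Nat.find hex, ¬ ∃ f, FbSeq G C T U m f := fun m hm => Nat.find_min hex hm
  set n := Nat.find hex
  have hn0 : 0 < n := by
    rcases Nat.eq_zero_or_pos n with h | h
    · rw [h] at hn
      exact absurd hn (Set.disjoint_left.1 hTU h0)
    · exact h
  have hT' : ∀ t ≤ n, f t ∈ T → t = 0 := by
    intro t ht hft
    by_contra h
    refine hmin (n - t) (by omega) ⟨fun k => f (t + k), hft, ?_, ?_, ?_⟩
    · simpa [Nat.add_sub_cancel' ht] using hn
    · intro k hk; exact hfC _ (by omega)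
    · intro k hk; exact hadj (t + k) (by omega)
  have hU' : ∀ t ≤ n, f t ∈ U → t = n := by
    intro t ht hft
    by_contra h
    exact hmin t (by omega) ⟨f, h0, hft, fun k hk => hfC _ (by omega),
      fun k hk => hadj k (by omega)⟩
  refine ⟨f '' Set.Icc 0 n, f 0, f n, ?_, (Set.finite_Icc _ _).image _, h0, hn, ⟨0, by simp, rfl⟩,
    ⟨n, by simp, rfl⟩, ?_, ?_, fb_interval f 0 n fun t _ ht => hadj t ht, ?_, ?_⟩
  · rintro _ ⟨t, ht, rfl⟩
    exact hfC t ht.2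
  · rintro _ ⟨t, ht, rfl⟩ h
    rw [hT' t ht.2 h]
  · rintro _ ⟨t, ht, rfl⟩ h
    rw [hU' t ht.2 h]
  · have : f '' Set.Icc 0 n \ {f 0} = f '' Set.Icc 1 n := by
      ext z
      constructor
      · rintro ⟨⟨t, ht, rfl⟩, hz⟩
        refine ⟨t, ⟨?_, ht.2⟩, rfl⟩
        by_contra h
        have : t = 0 := by omega
        exact hz (by rw [this]; rfl)
      · rintro ⟨t, ht, rfl⟩
        refine ⟨⟨t, ⟨Nat.zero_le _, ht.2⟩, rfl⟩, fun e => ?_⟩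
        rw [Set.mem_singleton_iff] at e
        have h1 := hT' t ht.2 (e ▸ h0)
        have h2 := ht.1
        omega
    rw [this]
    exact fb_interval f 1 n fun t _ ht => hadj t ht
  · have : f '' Set.Icc 0 n \ {f n} = f '' Set.Icc 0 (n - 1) := by
      ext z
      constructor
      · rintro ⟨⟨t, ht, rfl⟩, hz⟩
        refine ⟨t, ⟨Nat.zero_le _, ?_⟩, rfl⟩
        by_contra h
        have h2 := ht.2
        have : t = n := by omega
        exact hz (by rw [this]; rfl)
      · rintro ⟨t, ht, rfl⟩
        have h2 := ht.2
        refine ⟨⟨t, ⟨Nat.zero_le _, by omega⟩, rfl⟩, fun e => ?_⟩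
        rw [Set.mem_singleton_iff] at e
        have h1 := hU' t (by omega) (e ▸ hn)
        omega
    rw [this]
    exact fb_interval f 0 (n - 1) fun t _ ht => hadj t (by omega)

/-- A half-open bridge from the ray `u` to the ray `s`, avoiding `K` and the ray `v`. -/
def FbHalf {V : Type*} (G : SimpleGraph V) (u v s : ℕ → V) (K : Set V) : Prop :=
  ∃ (P : Set V) (i j : ℕ), P.Finite ∧ FbConn G P ∧ Disjoint P K ∧ s j ∈ P ∧
    (∃ c ∈ P, G.Adj (u i) c) ∧ Disjoint P (Set.range u) ∧ Disjoint P (Set.range v)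

theorem FbHalf.mono {V : Type*} {G : SimpleGraph V} {u v s : ℕ → V} {K K' : Set V}
    (h : FbHalf G u v s K') (hK : K ⊆ K') : FbHalf G u v s K := by
  obtain ⟨P, i, j, h1, h2, h3, h4⟩ := h
  exact ⟨P, i, j, h1, h2, h3.mono_right hK, h4⟩

/-- From a bridge we get half-open bridges both ways. -/
theorem fb_half_of_bridge {V : Type*} {G : SimpleGraph V} {u v s : ℕ → V} {K P : Set V} {a b : V}
    (h : FbBridge G (Set.range u) (Set.range v ∪ Set.range s) P a b) (hb : b ∈ Set.range s)
    (hus : Disjoint (Set.range u) (Set.range s)) (hvs : Disjoint (Set.range v) (Set.range s))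
    (hP : Disjoint P K) :
    FbHalf G u v s K ∧ FbHalf G s v u K := by
  obtain ⟨i, rfl⟩ := h.aT
  obtain ⟨j, rfl⟩ := hb
  have hab : u i ≠ s j := fun e => Set.disjoint_left.1 hus ⟨i, rfl⟩ (e ▸ ⟨j, rfl⟩)
  constructor
  · refine ⟨P \ {u i}, i, j, h.fin.subset Set.sdiff_subset, h.conna,
      hP.mono_left Set.sdiff_subset, ⟨h.bP, fun e => hab (Set.mem_singleton_iff.1 e).symm⟩, ?_,
      ?_, ?_⟩
    · obtain ⟨x, hx, y, hy, hyx, hxy⟩ := h.conn.exists_boundary (T := {u i})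
        (Set.singleton_subset_iff.2 h.aP) ⟨u i, rfl⟩
        (fun hh => hab (Set.mem_singleton_iff.1 (hh h.bP)).symm)
      rw [Set.mem_singleton_iff] at hx
      subst hx
      exact ⟨y, ⟨hy, hyx⟩, hxy⟩
    · rw [Set.disjoint_left]
      exact fun z hz hzu => hz.2 (h.onlyT z hz.1 hzu)
    · rw [Set.disjoint_left]
      intro z hz hzv
      have := h.onlyU z hz.1 (Or.inl hzv)
      exact Set.disjoint_left.1 hvs hzv (this ▸ ⟨j, rfl⟩)
  · refine ⟨P \ {s j}, j, i, h.fin.subset Set.sdiff_subset, h.connb,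
      hP.mono_left Set.sdiff_subset, ⟨h.aP, fun e => hab (Set.mem_singleton_iff.1 e)⟩, ?_,
      ?_, ?_⟩
    · obtain ⟨x, hx, y, hy, hyx, hxy⟩ := h.conn.exists_boundary (T := {s j})
        (Set.singleton_subset_iff.2 h.bP) ⟨s j, rfl⟩
        (fun hh => hab (Set.mem_singleton_iff.1 (hh h.aP)))
      rw [Set.mem_singleton_iff] at hx
      subst hx
      exact ⟨y, ⟨hy, hyx⟩, hxy⟩
    · rw [Set.disjoint_left]
      exact fun z hz hzu => hz.2 (h.onlyU z hz.1 (Or.inr hzu))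
    · rw [Set.disjoint_left]
      intro z hz hzv
      have := h.onlyU z hz.1 (Or.inl hzv)
      exact Set.disjoint_left.1 hvs hzv (this ▸ ⟨j, rfl⟩)

theorem fb_ray_meets {V : Type*} {C : Set V} (hC : Cᶜ.Finite) (u : ℕ → V)
    (hu : Function.Injective u) (M : ℕ) : ∃ t, M < t ∧ u t ∈ C := by
  by_contra! h
  refine Set.Ioi_infinite M (Set.Finite.of_finite_image (f := u) (hC.subset ?_) hu.injOn)
  rintro _ ⟨t, ht, rfl⟩
  exact h t ht

theorem fb_half_exists {V : Type*} {G : SimpleGraph V}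
    (hend : ∀ K : Set V, K.Finite → ∃ C, FbEnd G K C) (u v s : ℕ → V)
    (hu : Function.Injective u) (hs : Function.Injective s)
    (hus : Disjoint (Set.range u) (Set.range s)) (hvs : Disjoint (Set.range v) (Set.range s))
    (huv : Disjoint (Set.range u) (Set.range v)) (K : Set V) (hK : K.Finite) :
    (FbHalf G u v s K ∧ FbHalf G s v u K) ∨ (FbHalf G u s v K ∧ FbHalf G v s u K) := by
  obtain ⟨C, hC⟩ := hend K hK
  obtain ⟨t, -, ht⟩ := fb_ray_meets hC.cofin u hu 0
  obtain ⟨t', -, ht'⟩ := fb_ray_meets hC.cofin s hs 0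
  obtain ⟨P, a, b, hPC, hP⟩ := fb_connector (T := Set.range u)
    (U := Set.range v ∪ Set.range s) hC.conn (Set.disjoint_union_right.2 ⟨huv, hus⟩)
    ⟨u t, ht, t, rfl⟩ ⟨s t', ht', Or.inr ⟨t', rfl⟩⟩
  have hPK : Disjoint P K := by
    rw [Set.disjoint_left]
    exact fun z hz hzK => hC.sub (hPC hz) hzK
  rcases hP.bU with h | h
  · right
    rw [Set.union_comm] at hP
    exact fb_half_of_bridge hP h huv hvs.symm hPK
  · left
    exact fb_half_of_bridge hP h hus hvs hPK

theorem fb_middle {V : Type*} {G : SimpleGraph V}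
    (hend : ∀ K : Set V, K.Finite → ∃ C, FbEnd G K C) (r : Fin 3 → ℕ → V)
    (hr : ∀ i j s t, r i s = r j t → i = j ∧ s = t) :
    ∃ a b m : Fin 3, a ≠ b ∧ a ≠ m ∧ b ≠ m ∧ ∀ K : Set V, K.Finite →
      FbHalf G (r a) (r b) (r m) K ∧ FbHalf G (r b) (r a) (r m) K := by
  have hinj : ∀ i, Function.Injective (r i) := fun i s t e => (hr i i s t e).2
  have hdis : ∀ i j, i ≠ j → Disjoint (Set.range (r i)) (Set.range (r j)) := by
    intro i j hij
    rw [Set.disjoint_left]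
    rintro _ ⟨s, rfl⟩ ⟨t, e⟩
    exact hij (hr j i t s e).1.symm
  have key := fun a b m (h1 : a ≠ b) (h2 : a ≠ m) (h3 : b ≠ m) => fb_half_exists hend (r a) (r b)
    (r m) (hinj a) (hinj m) (hdis _ _ h2) (hdis _ _ h3) (hdis _ _ h1)
  by_contra! hcon
  have k0 := hcon 1 2 0 (by decide) (by decide) (by decide)
  have k1 := hcon 2 0 1 (by decide) (by decide) (by decide)
  have k2 := hcon 0 1 2 (by decide) (by decide) (by decide)
  obtain ⟨K0, f0, k0⟩ := k0
  obtain ⟨K1, f1, k1⟩ := k1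
  obtain ⟨K2, f2, k2⟩ := k2
  set K := K0 ∪ K1 ∪ K2 with hK
  have hKf : K.Finite := (f0.union f1).union f2
  have s0 : K0 ⊆ K := fun x hx => Or.inl (Or.inl hx)
  have s1 : K1 ⊆ K := fun x hx => Or.inl (Or.inr hx)
  have s2 : K2 ⊆ K := fun x hx => Or.inr hx
  have q0 : FbHalf G (r 1) (r 2) (r 0) K → ¬ FbHalf G (r 2) (r 1) (r 0) K :=
    fun h h' => k0 (h.mono s0) (h'.mono s0)
  have q1 : FbHalf G (r 2) (r 0) (r 1) K → ¬ FbHalf G (r 0) (r 2) (r 1) K :=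
    fun h h' => k1 (h.mono s1) (h'.mono s1)
  have q2 : FbHalf G (r 0) (r 1) (r 2) K → ¬ FbHalf G (r 1) (r 0) (r 2) K :=
    fun h h' => k2 (h.mono s2) (h'.mono s2)
  have e0 := key 0 1 2 (by decide) (by decide) (by decide) K hKf
  have e1 := key 1 2 0 (by decide) (by decide) (by decide) K hKf
  have e2 := key 2 0 1 (by decide) (by decide) (by decide) K hKf
  clear key hcon k0 k1 k2 s0 s1 s2
  rcases e0 with ⟨a0, b0⟩ | ⟨a0, b0⟩ <;> rcases e1 with ⟨a1, b1⟩ | ⟨a1, b1⟩ <;>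
    rcases e2 with ⟨a2, b2⟩ | ⟨a2, b2⟩ <;>
    first
      | exact q0 ‹_› ‹_›
      | exact q1 ‹_› ‹_›
      | exact q2 ‹_› ‹_›


theorem fb_mkConfig {V : Type*} {G : SimpleGraph V} {A' X Y C A L : Set V}
    (h1 : Disjoint A' X) (h2 : Disjoint A' Y) (h3 : Disjoint X Y)
    (h4 : Disjoint C A) (h5 : Disjoint C L) (h6 : Disjoint A L)
    (a1 : Disjoint A' C) (a2 : Disjoint A' A) (a3 : Disjoint A' L)
    (b1 : Disjoint X C) (b2 : Disjoint X A) (b3 : Disjoint X L)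
    (c1 : Disjoint Y C) (c2 : Disjoint Y A) (c3 : Disjoint Y L)
    (d2 : FbConn G (A' ∪ A)) (d3 : FbConn G (A' ∪ L))
    (e1 : FbConn G (X ∪ C)) (e2 : FbConn G (X ∪ A)) (e3 : FbConn G (X ∪ L))
    (g1 : FbConn G (Y ∪ C)) (g2 : FbConn G (Y ∪ A)) (g3 : FbConn G (Y ∪ L))
    (n1 : A'.Nonempty) (n2 : X.Nonempty) (n3 : Y.Nonempty) (n4 : C.Nonempty) (n5 : A.Nonempty)
    (n6 : L.Nonempty) (f1 : A'.Finite) (f2 : X.Finite) (f3 : Y.Finite) (f5 : A.Finite)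
    (f6 : L.Finite) (f4 : Cᶜ.Finite) : FbConfig G ![A', X, Y] ![C, A, L] where
  rr i k hik := by
    fin_cases i <;> fin_cases k <;> first | exact absurd rfl hik | assumption | (symm; assumption)
  dd i k hik := by
    fin_cases i <;> fin_cases k <;> first | exact absurd rfl hik | assumption | (symm; assumption)
  rd i k := by
    fin_cases i <;> fin_cases k <;> assumption
  conn i k hik := by
    fin_cases i <;> fin_cases k <;> first | exact absurd ⟨rfl, rfl⟩ hik | assumption
  nr i := by fin_cases i <;> assumption
  nd i := by fin_cases i <;> assumption
  fr i := by fin_cases i <;> assumption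
  fd i hi := by fin_cases i <;> first | exact absurd rfl hi | assumption
  cd := f4

theorem fb_ray_bound {V : Type*} {P : Set V} (hP : P.Finite) (s : ℕ → V)
    (hs : Function.Injective s) : ∃ N, ∀ t, s t ∈ P → t ≤ N := by
  obtain ⟨N, hN⟩ := (hP.preimage hs.injOn).bddAbove
  exact ⟨N, fun t ht => hN ht⟩

theorem fb_build {V : Type*} {G : SimpleGraph V}
    (hend : ∀ K : Set V, K.Finite → ∃ C, FbEnd G K C) (u v s : ℕ → V)
    (hu : Function.Injective u) (hv : Function.Injective v) (hs : Function.Injective s)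
    (au : ∀ t, G.Adj (u t) (u (t + 1))) (av : ∀ t, G.Adj (v t) (v (t + 1)))
    (as : ∀ t, G.Adj (s t) (s (t + 1)))
    (hus : Disjoint (Set.range u) (Set.range s)) (hvs : Disjoint (Set.range v) (Set.range s))
    (huv : Disjoint (Set.range u) (Set.range v))
    (hhalf : ∀ K : Set V, K.Finite → FbHalf G u v s K ∧ FbHalf G v u s K) :
    ∃ R D, FbConfig G R D := by
  have iu : ∀ (w : ℕ → V) (I : Set ℕ), w '' I ⊆ Set.range w := fun w I => Set.image_subset_range w I
  obtain ⟨⟨P1, i1, j1, P1f, P1c, -, P1s, ⟨p1, hp1, hap1⟩, P1u, P1v⟩,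
    ⟨Q1, k1, l1, Q1f, Q1c, -, Q1s, ⟨q1, hq1, haq1⟩, Q1v, Q1u⟩⟩ := hhalf ∅ Set.finite_empty
  obtain ⟨N1, hN1⟩ := fb_ray_bound (P1f.union Q1f) s hs
  set A : Set V := P1 ∪ s '' Set.Icc 0 N1 ∪ Q1 with hA
  have Af : A.Finite := (P1f.union ((Set.finite_Icc _ _).image _)).union Q1f
  have Ac : FbConn G A :=
    (P1c.union (fb_interval s 0 N1 fun t _ _ => as t) P1s
      ⟨j1, ⟨Nat.zero_le _, hN1 _ (Or.inl P1s)⟩, rfl⟩).union Q1c (z := s l1)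
      (Or.inr ⟨l1, ⟨Nat.zero_le _, hN1 _ (Or.inr Q1s)⟩, rfl⟩) Q1s
  have sA : ∀ t, s t ∈ A ↔ t ≤ N1 := by
    intro t
    constructor
    · rintro ((h | ⟨t', ht', e⟩) | h)
      · exact hN1 t (Or.inl h)
      · rw [← hs e]; exact ht'.2
      · exact hN1 t (Or.inr h)
    · intro h
      exact Or.inl (Or.inr ⟨t, ⟨Nat.zero_le _, h⟩, rfl⟩)
  have Au : Disjoint A (Set.range u) := by
    simp only [hA, Set.disjoint_union_left]
    exact ⟨⟨P1u, hus.symm.mono_left (iu s _)⟩, Q1u⟩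
  have Av : Disjoint A (Set.range v) := by
    simp only [hA, Set.disjoint_union_left]
    exact ⟨⟨P1v, hvs.symm.mono_left (iu s _)⟩, Q1v⟩
  set A' : Set V := {s (N1 + 1)} with hA'
  have A'f : A'.Finite := Set.finite_singleton _
  obtain ⟨⟨P2, i2, j2, P2f, P2c, P2K, P2s, ⟨p2, hp2, hap2⟩, P2u, P2v⟩,
    ⟨Q2, k2, l2, Q2f, Q2c, Q2K, Q2s, ⟨q2, hq2, haq2⟩, Q2v, Q2u⟩⟩ := hhalf (A ∪ A') (Af.union A'f)
  obtain ⟨N2, hN2⟩ := fb_ray_bound (P2f.union Q2f) s hs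
  have hge : ∀ t, s t ∉ A ∪ A' → N1 + 2 ≤ t := by
    intro t ht
    by_contra hlt
    apply ht
    rcases Nat.lt_or_ge N1 t with h | h
    · have : t = N1 + 1 := by omega
      subst this
      exact Or.inr rfl
    · exact Or.inl ((sA t).2 h)
  have P2ge := hge j2 fun h => Set.disjoint_left.1 P2K P2s h
  have Q2ge := hge l2 fun h => Set.disjoint_left.1 Q2K Q2s h
  set L : Set V := P2 ∪ s '' Set.Icc (N1 + 2) N2 ∪ Q2 with hL
  have Lf : L.Finite := (P2f.union ((Set.finite_Icc _ _).image _)).union Q2f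
  have Lc : FbConn G L :=
    (P2c.union (fb_interval s (N1 + 2) N2 fun t _ _ => as t) P2s
      ⟨j2, ⟨P2ge, hN2 _ (Or.inl P2s)⟩, rfl⟩).union Q2c (z := s l2)
      (Or.inr ⟨l2, ⟨Q2ge, hN2 _ (Or.inr Q2s)⟩, rfl⟩) Q2s
  have sL : s (N1 + 2) ∈ L :=
    Or.inl (Or.inr ⟨N1 + 2, ⟨le_rfl, P2ge.trans (hN2 _ (Or.inl P2s))⟩, rfl⟩)
  have Lu : Disjoint L (Set.range u) := by
    simp only [hL, Set.disjoint_union_left]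
    exact ⟨⟨P2u, hus.symm.mono_left (iu s _)⟩, Q2u⟩
  have Lv : Disjoint L (Set.range v) := by
    simp only [hL, Set.disjoint_union_left]
    exact ⟨⟨P2v, hvs.symm.mono_left (iu s _)⟩, Q2v⟩
  have LK : Disjoint L (A ∪ A') := by
    rw [hL, Set.disjoint_union_left, Set.disjoint_union_left]
    refine ⟨⟨P2K, ?_⟩, Q2K⟩
    rw [Set.disjoint_left]
    rintro _ ⟨t, ht, rfl⟩ (h | h)
    · have := (sA t).1 h
      have := ht.1
      omega
    · have := hs (Set.mem_singleton_iff.1 h)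
      have := ht.1
      omega
  have AA' : Disjoint A' A := by
    rw [hA', Set.disjoint_singleton_left, sA]
    omega
  have A'u : Disjoint A' (Set.range u) := hus.symm.mono_left (by
    rintro _ rfl; exact ⟨_, rfl⟩)
  have A'v : Disjoint A' (Set.range v) := hvs.symm.mono_left (by
    rintro _ rfl; exact ⟨_, rfl⟩)
  set X : Set V := u '' Set.Icc 0 (max i1 i2) with hX
  set Y : Set V := v '' Set.Icc 0 (max k1 k2) with hY
  have Xf : X.Finite := (Set.finite_Icc _ _).image _
  have Yf : Y.Finite := (Set.finite_Icc _ _).image _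
  have Xu : X ⊆ Set.range u := iu u _
  have Yv : Y ⊆ Set.range v := iu v _
  have Xc : FbConn G X := fb_interval u _ _ fun t _ _ => au t
  have Yc : FbConn G Y := fb_interval v _ _ fun t _ _ => av t
  have hKf : (X ∪ Y ∪ A ∪ A' ∪ L).Finite := (((Xf.union Yf).union Af).union A'f).union Lf
  obtain ⟨C, hC⟩ := hend _ hKf
  have hCd : Disjoint (X ∪ Y ∪ A ∪ A' ∪ L) C := by
    rw [Set.disjoint_left]
    exact fun z hz hzC => hC.sub hzC hz
  simp only [Set.disjoint_union_left] at hCd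
  obtain ⟨⟨⟨⟨CX, CY⟩, CA⟩, CA'⟩, CL⟩ := hCd
  have tail : ∀ (w : ℕ → V), Function.Injective w → (∀ t, G.Adj (w t) (w (t + 1))) → ∀ M,
      (∀ t, M < t → w t ∉ X ∪ Y ∪ A ∪ A' ∪ L) → w (M + 1) ∈ C := by
    intro w hw aw M hM
    obtain ⟨t, ht, htC⟩ := fb_ray_meets hC.cofin w hw M
    refine (fb_interval w (M + 1) t fun t _ _ => aw t).subset_of_closed (T := C)
      ⟨w t, ⟨t, ⟨ht, le_rfl⟩, rfl⟩, htC⟩ ?_ ⟨M + 1, ⟨le_rfl, ht⟩, rfl⟩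
    rintro x - hxC _ ⟨t', ht', rfl⟩ hxy
    exact hC.closed x hxC _ (hM t' ht'.1) hxy
  have uC : u (max i1 i2 + 1) ∈ C := by
    refine tail u hu au _ fun t ht => ?_
    rintro ((((⟨t', ht', e⟩ | h) | h) | h) | h)
    · have := hu e
      have := ht'.2
      omega
    · exact Set.disjoint_left.1 huv ⟨t, rfl⟩ (Yv h)
    · exact Set.disjoint_left.1 Au h ⟨t, rfl⟩
    · exact Set.disjoint_left.1 A'u h ⟨t, rfl⟩
    · exact Set.disjoint_left.1 Lu h ⟨t, rfl⟩
  have vC : v (max k1 k2 + 1) ∈ C := by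
    refine tail v hv av _ fun t ht => ?_
    rintro ((((h | ⟨t', ht', e⟩) | h) | h) | h)
    · exact Set.disjoint_left.1 huv (Xu h) ⟨t, rfl⟩
    · have := hv e
      have := ht'.2
      omega
    · exact Set.disjoint_left.1 Av h ⟨t, rfl⟩
    · exact Set.disjoint_left.1 A'v h ⟨t, rfl⟩
    · exact Set.disjoint_left.1 Lv h ⟨t, rfl⟩
  refine ⟨_, _, fb_mkConfig (A' := A') (X := X) (Y := Y) (C := C) (A := A) (L := L)
    (A'u.mono_right Xu) (A'v.mono_right Yv) ((huv.mono_left Xu).mono_right Yv)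
    CA.symm CL.symm (LK.mono_right Set.subset_union_left).symm
    CA' AA' (LK.mono_right Set.subset_union_right).symm
    CX (Au.mono_right Xu).symm (Lu.mono_right Xu).symm
    CY (Av.mono_right Yv).symm (Lv.mono_right Yv).symm
    ?_ ?_ ?_ ?_ ?_ ?_ ?_ ?_ ⟨_, rfl⟩ ⟨u 0, 0, by simp, rfl⟩ ⟨v 0, 0, by simp, rfl⟩
    ⟨_, uC⟩ ⟨s 0, (sA 0).2 (Nat.zero_le _)⟩ ⟨_, sL⟩ A'f Xf Yf Af Lf hC.cofin⟩
  · exact (FbConn.singleton _).union_adj Ac (z' := s N1) rfl ((sA N1).2 le_rfl) (as N1).symm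
  · exact (FbConn.singleton _).union_adj Lc rfl sL (as (N1 + 1))
  · exact Xc.union_adj hC.conn (z := u (max i1 i2)) ⟨_, by simp, rfl⟩ uC (au _)
  · exact Xc.union_adj Ac (z := u i1) (z' := p1) ⟨_, by simp, rfl⟩ (Or.inl (Or.inl hp1)) hap1
  · exact Xc.union_adj Lc (z := u i2) (z' := p2) ⟨_, by simp, rfl⟩ (Or.inl (Or.inl hp2)) hap2
  · exact Yc.union_adj hC.conn (z := v (max k1 k2)) ⟨_, by simp, rfl⟩ vC (av _)
  · exact Yc.union_adj Ac (z := v k1) (z' := q1) ⟨_, by simp, rfl⟩ (Or.inr hq1) haq1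
  · exact Yc.union_adj Lc (z := v k2) (z' := q2) ⟨_, by simp, rfl⟩ (Or.inr hq2) haq2

theorem fb_exists_config {V : Type*} {G : SimpleGraph V} [G.LocallyFinite]
    (htrans : ∀ u v : V, ∃ α : G ≃g G, α u = v) (hone : OneEnded G) :
    ∃ R D, FbConfig G R D := by
  have hconn := fb_conn_univ htrans hone
  have hend : ∀ K : Set V, K.Finite → ∃ C, FbEnd G K C := fun K hK => by
    obtain ⟨C, h1, h2, h3, h4, h5⟩ := fb_end hconn hone K hK
    exact ⟨C, h1, h2, h3, h4, h5⟩
  have : Infinite V := by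
    obtain ⟨C, hC⟩ := hend ∅ Set.finite_empty
    exact Set.infinite_univ_iff.1 (hC.inf.mono (Set.subset_univ _))
  obtain ⟨A, hA, h⟩ := fb_good_set hconn htrans hend
  obtain ⟨r, hadj, hr⟩ := fb_rays hA h
  obtain ⟨a, b, m, hab, ham, hbm, hh⟩ := fb_middle (G := G) hend r hr
  have hinj : ∀ i, Function.Injective (r i) := fun i s t e => (hr i i s t e).2
  have hdis : ∀ i j, i ≠ j → Disjoint (Set.range (r i)) (Set.range (r j)) := by
    intro i j hij
    rw [Set.disjoint_left]
    rintro _ ⟨s, rfl⟩ ⟨t, e⟩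
    exact hij (hr j i t s e).1.symm
  exact fb_build hend (r a) (r b) (r m) (hinj a) (hinj b) (hinj m) (hadj a) (hadj b) (hadj m)
    (hdis _ _ ham) (hdis _ _ hbm) (hdis _ _ hab) hh


/-- Krön: in a locally finite, vertex-transitive, 1-ended planar graph, every face boundary
of every planar embedding contains only finitely many edges. -/
theorem face_boundaries_finite
    {V : Type*} (G : SimpleGraph V) [G.LocallyFinite]
    (htrans : ∀ u v : V, ∃ α : G ≃g G, α u = v)
    (hone : OneEnded G)
    (emb : PlanarEmbedding G) :
    ∀ F : Set (ℝ × ℝ), emb.IsFace F → (emb.boundaryEdges F).Finite := by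
  rintro F ⟨x, hx, rfl⟩
  by_contra hinf
  set F := connectedComponentIn emb.imageᶜ x with hF
  have hW : {u | emb.vpos u ∈ closure F}.Infinite := by
    intro hfin
    refine hinf (((hfin.prod hfin).image (fun z : V × V => s(z.1, z.2))).subset ?_)
    rintro e ⟨u, v, h, rfl, hs⟩
    exact ⟨(u, v), ⟨hs (fb_arc_ends emb h).1, hs (fb_arc_ends emb h).2⟩, rfl⟩
  obtain ⟨R, D, hRD⟩ := fb_exists_config htrans hone
  obtain ⟨v, hv⟩ := hW.nonempty
  obtain ⟨z, hz⟩ := hRD.nr 0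
  obtain ⟨α, hα⟩ := htrans z v
  have hcfg := hRD.image α
  obtain ⟨w, hwF, hw⟩ : ∃ w, emb.vpos w ∈ closure F ∧ w ∈ α '' D 0 := by
    by_contra! hcon
    exact hW (hcfg.cd.subset fun w hw => hcon w hw)
  exact fb_config_false emb hcfg isPreconnected_connectedComponentIn
    (Set.disjoint_left.2 fun y hy => connectedComponentIn_subset _ _ hy)
    (v := v) (w := w) ⟨z, hz, hα⟩ hw hv hwF
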